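/- arXiv:2412.20809 — 3 statements merged into one kernel-verified Lean document; each statement's English description precedes it below -/
import Mathlib

section
/- Let k be an algebraically closed field of characteristic 0, N ≥ 7, and let λ be an orthogonal partition of N with λ₁ ≥ 3 whose number of parts p satisfies 2m := N − p < ⌊N/2⌋. Then the Zariski closure in Mat_N(k) of the set {x + y : x, y ∈ O_λ ∩ so_N(k)} equals {M ∈ so_N(k) : rank(M) ≤ 4m}; that is, the conical secant variety of this nilpotent SO_N-orbit is the skew-symmetric determinantal variety Sk_{4m}(N). -/
open Matrix

noncomputable section

/-- The Zariski closure of a set of `N × N` matrices. -/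
def zClosure {k : Type*} [CommRing k] {N : ℕ}
    (S : Set (Matrix (Fin N) (Fin N) k)) : Set (Matrix (Fin N) (Fin N) k) :=
  {M | ∀ P : MvPolynomial (Fin N × Fin N) k,
      (∀ x ∈ S, MvPolynomial.eval (fun q => x q.1 q.2) P = 0) →
      MvPolynomial.eval (fun q => M q.1 q.2) P = 0}

/-- The set of nilpotent matrices of Jordan type `lam`. -/
def jordanOrbit (k : Type*) [Field k] (N : ℕ) {p : ℕ} (lam : Fin p → ℕ) :
    Set (Matrix (Fin N) (Fin N) k) :=
  {M | ∀ i : ℕ, 1 ≤ i → (M ^ i).rank = ∑ l, (lam l - i)}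

/-- The orthogonal Lie algebra `so_N(k)`: skew-symmetric matrices. -/
def soSet (k : Type*) [CommRing k] (N : ℕ) : Set (Matrix (Fin N) (Fin N) k) :=
  {M | Mᵀ = -M}

/-- A partition is orthogonal if each (nonzero) even part occurs with even multiplicity. -/
def IsOrthogonalParts {p : ℕ} (lam : Fin p → ℕ) : Prop :=
  ∀ m : ℕ, 0 < m → Even m → Even ((Finset.univ.filter (fun l => lam l = m)).card)

/-!
A skew-symmetric matrix of rank at most `4m` can be written `A Ω Aᵀ` with `A` of size `N × 4m` and
`Ω = J ⊕ J` the standard symplectic form. The two column blocks of `A` contribute `x = A₁ J A₁ᵀ` and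
`y = A₂ J A₂ᵀ`, and for `A₁` of full column rank `x` has Jordan type `λ` exactly when `J A₁ᵀ A₁` has
the type obtained from `λ` by decreasing every part by one. Call `A` admissible if both `x` and `y`
have type `λ`. Admissibility is preserved when each block is multiplied on the left by its own
orthogonal matrix, and `A Ω Aᵀ` does not change when `A` is multiplied on the right by a symplectic
matrix. It remains to see that these motions carry one admissible `A` to a Zariski dense set of
`N × 4m` matrices. By a formal tangent space argument this holds as soon as no nonzero covector
annihilates all the infinitesimal motions at `A`, and for `A` of full column rank this condition
depends only on the Gram matrix `Aᵀ A`. Since `λ` is orthogonal, the decreased type is that of some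
element `J G` of the symplectic Lie algebra, with `G` symmetric; a Gram matrix with two such `G` in
general position on the diagonal, and `J D` for a diagonal `D` with distinct squares off it,
satisfies the condition.
-/

/-! ### Density of a set with enough tangent directions -/

section Density

variable {k σ : Type*}

theorem eval_aeval_polynomial [CommSemiring k] (c : σ → Polynomial k) (P : MvPolynomial σ k)
    (s : k) :
    (MvPolynomial.aeval c P).eval s = MvPolynomial.eval (fun i => (c i).eval s) P := by
  induction P using MvPolynomial.induction_on with
  | C a => simp
  | add p q hp hq => simp [hp, hq]
  | mul_X p j hp => simp [hp]

theorem derivative_aeval [CommSemiring k] [Fintype σ] (c : σ → Polynomial k)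
    (P : MvPolynomial σ k) :
    Polynomial.derivative (MvPolynomial.aeval c P) =
      ∑ i, MvPolynomial.aeval c (MvPolynomial.pderiv i P) * Polynomial.derivative (c i) := by
  classical
  induction P using MvPolynomial.induction_on with
  | C a => simp
  | add p q hp hq => simp [hp, hq, add_mul, Finset.sum_add_distrib]
  | mul_X p j hp =>
    simp [hp, MvPolynomial.pderiv_X, Pi.single_apply, add_mul, Finset.sum_add_distrib,
      Finset.sum_mul, mul_right_comm, mul_comm (c j), add_comm,
      apply_ite (MvPolynomial.aeval c), ite_mul]

theorem sum_pderiv_mul_derivative_eq_zero [CommRing k] [IsDomain k] [Infinite k] [Fintype σ]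
    {P : MvPolynomial σ k} {c : σ → Polynomial k}
    (h : ∀ᶠ s in Filter.cofinite, MvPolynomial.eval (fun i => (c i).eval s) P = 0) (s : k) :
    ∑ i, MvPolynomial.eval (fun i => (c i).eval s) (MvPolynomial.pderiv i P) *
      (Polynomial.derivative (c i)).eval s = 0 := by
  have hzero : MvPolynomial.aeval c P = 0 :=
    Polynomial.eq_zero_of_infinite_isRoot _ <| Filter.frequently_cofinite_iff_infinite.1 <|
      h.frequently.mono fun s hs => (eval_aeval_polynomial c P s).trans hs
  simpa [derivative_aeval, Polynomial.eval_finsetSum, eval_aeval_polynomial] using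
    congrArg (fun q => (Polynomial.derivative q).eval s) hzero

theorem totalDegree_pderiv_le [CommSemiring k] (P : MvPolynomial σ k) (i : σ) :
    (MvPolynomial.pderiv i P).totalDegree ≤ P.totalDegree - 1 := by
  refine Finset.sup_le fun d hd => ?_
  rw [MvPolynomial.mem_support_iff, MvPolynomial.coeff_pderiv] at hd
  have hle := MvPolynomial.le_totalDegree
    (MvPolynomial.mem_support_iff.2 (left_ne_zero_of_mul hd))
  rw [Finsupp.sum_add_index' (fun _ => rfl) (fun _ _ _ => rfl),
    Finsupp.sum_single_index rfl] at hle
  omega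

theorem eq_C_of_pderiv_eq_zero [CommRing k] [IsDomain k] [CharZero k] {P : MvPolynomial σ k}
    (h : ∀ i, MvPolynomial.pderiv i P = 0) : P = MvPolynomial.C (MvPolynomial.coeff 0 P) := by
  classical
  ext d
  rw [MvPolynomial.coeff_C]
  split_ifs with hd
  · rw [← hd]
  · obtain ⟨i, hi⟩ : ∃ i, d i ≠ 0 := by
      by_contra! H
      exact hd (Finsupp.ext fun i => (H i).symm)
    have hle : Finsupp.single i 1 ≤ d := by
      simpa [Finsupp.single_le_iff] using Nat.one_le_iff_ne_zero.2 hi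
    have hcoeff := congrArg (MvPolynomial.coeff (d - Finsupp.single i 1)) (h i)
    rw [MvPolynomial.coeff_pderiv, tsub_add_cancel_of_le hle, MvPolynomial.coeff_zero] at hcoeff
    exact (mul_eq_zero.1 hcoeff).resolve_right (Nat.cast_add_one_ne_zero _)

theorem eq_zero_of_forall_eval_pderiv_eq_zero [CommRing k] [IsDomain k] [CharZero k]
    {T : Set (σ → k)} (hT : T.Nonempty)
    (h : ∀ P : MvPolynomial σ k, (∀ t ∈ T, MvPolynomial.eval t P = 0) →
      ∀ t ∈ T, ∀ i, MvPolynomial.eval t (MvPolynomial.pderiv i P) = 0)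
    {P : MvPolynomial σ k} (hP : ∀ t ∈ T, MvPolynomial.eval t P = 0) : P = 0 := by
  induction hn : P.totalDegree using Nat.strong_induction_on generalizing P with
  | _ n ih =>
    have hconst : P = MvPolynomial.C (MvPolynomial.coeff 0 P) := by
      rcases Nat.eq_zero_or_pos n with rfl | hpos
      · exact MvPolynomial.totalDegree_eq_zero_iff_eq_C.1 hn
      · exact eq_C_of_pderiv_eq_zero fun i =>
          ih _ (by have := totalDegree_pderiv_le P i; omega) (fun t ht => h P hP t ht i) rfl
    obtain ⟨t, ht⟩ := hT
    have hzero := hP t ht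
    rw [hconst, MvPolynomial.eval_C] at hzero
    rw [hconst, hzero, MvPolynomial.C_0]

/-- `v` is the velocity at `0` of a quadratic arc `x + s v + s² w` which lies in `T` for all but
finitely many values of the parameter `s`: an elementary substitute for a Zariski tangent vector
of `T` at `x`. -/
def IsArcTangent (k : Type*) {E : Type*} [Semiring k] [AddCommMonoid E] [Module k E] (T : Set E)
    (x v : E) : Prop :=
  ∃ w : E, ∀ᶠ s : k in Filter.cofinite, x + s • v + s ^ 2 • w ∈ T

theorem eq_zero_of_forall_isArcTangent [CommRing k] [IsDomain k] [CharZero k] [Fintype σ]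
    {T : Set (σ → k)} (hT : T.Nonempty)
    (h : ∀ t ∈ T, ∀ g : σ → k, (∀ v, IsArcTangent k T t v → g ⬝ᵥ v = 0) → g = 0)
    {P : MvPolynomial σ k} (hP : ∀ t ∈ T, MvPolynomial.eval t P = 0) : P = 0 := by
  have : Infinite k := CharZero.infinite k
  refine eq_zero_of_forall_eval_pderiv_eq_zero hT (fun Q hQ t ht => ?_) hP
  refine congrFun (h t ht (fun i => MvPolynomial.eval t (MvPolynomial.pderiv i Q)) ?_)
  rintro v ⟨w, hw⟩
  let c : σ → Polynomial k := fun i =>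
    Polynomial.C (t i) + Polynomial.X * Polynomial.C (v i) + Polynomial.X ^ 2 * Polynomial.C (w i)
  have hc : ∀ᶠ s in Filter.cofinite, MvPolynomial.eval (fun i => (c i).eval s) Q = 0 :=
    hw.mono fun s hs => by
      have hpt : (fun i => (c i).eval s) = t + s • v + s ^ 2 • w := by
        ext i
        simp only [c, Polynomial.eval_add, Polynomial.eval_mul, Polynomial.eval_pow,
          Polynomial.eval_C, Polynomial.eval_X, Pi.add_apply, Pi.smul_apply, smul_eq_mul]
      rw [hpt, hQ _ hs]
  simpa [c, dotProduct] using sum_pderiv_mul_derivative_eq_zero hc 0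

theorem eq_zero_of_forall_isArcTangent_matrix [CommRing k] [IsDomain k] [CharZero k]
    {n c : Type*} [Fintype n] [Fintype c] {T : Set (Matrix n c k)} (hT : T.Nonempty)
    (h : ∀ A ∈ T, ∀ L : Matrix n c k, (∀ V, IsArcTangent k T A V → (Lᵀ * V).trace = 0) → L = 0)
    {P : MvPolynomial (n × c) k}
    (hP : ∀ A ∈ T, MvPolynomial.eval (fun q => A q.1 q.2) P = 0) : P = 0 := by
  obtain ⟨A₀, hA₀⟩ := hT
  refine eq_zero_of_forall_isArcTangent (T := {t | of (fun i j => t (i, j)) ∈ T})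
    ⟨fun q => A₀ q.1 q.2, hA₀⟩ (fun t ht g hg => ?_) (fun t ht => hP _ ht)
  have hL : of (fun i j => g (i, j)) = 0 := by
    refine h _ ht _ fun V ⟨W, hW⟩ => ?_
    have hdot := hg (fun q => V q.1 q.2) ⟨fun q => W q.1 q.2, hW⟩
    rw [dotProduct, Fintype.sum_prod_type_right] at hdot
    simpa [trace, mul_apply] using hdot
  exact funext fun q => congrFun (congrFun hL q.1) q.2

end Density

/-! ### Skew-symmetric matrices of bounded rank -/

section SkewNormalForm

variable {k n l : Type*} [Field k] [Fintype n]

theorem rank_add_two_le_of_range_le {M M' : Matrix n n k}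
    (hle : LinearMap.range M'.mulVecLin ≤ LinearMap.range M.mulVecLin) {a b : n}
    (haa : M a a = 0) (hbb : M b b = 0) (hab : M a b ≠ 0) (hba : M b a ≠ 0)
    (ha : ∀ j, M' a j = 0) (hb : ∀ j, M' b j = 0) : M'.rank + 2 ≤ M.rank := by
  classical
  let f : LinearMap.range M.mulVecLin →ₗ[k] k × k :=
    ((LinearMap.proj (R := k) (φ := fun _ : n => k) a).prod (LinearMap.proj b)).comp
      (LinearMap.range M.mulVecLin).subtype
  have hsurj : Function.Surjective f := by
    rintro ⟨s, t⟩
    refine ⟨⟨M *ᵥ (Pi.single b (s / M a b) + Pi.single a (t / M b a)), ⟨_, rfl⟩⟩, ?_⟩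
    simp [f, mulVec_add, haa, hbb, mul_comm (M a b), mul_comm (M b a), hab, hba]
  have hker : (LinearMap.range M'.mulVecLin).comap (LinearMap.range M.mulVecLin).subtype ≤
      LinearMap.ker f := by
    rintro ⟨x, hx⟩ ⟨y, hy⟩
    have hxy : x = M' *ᵥ y := hy.symm
    simp [f, hxy, mulVec, dotProduct, ha, hb]
  have hdim := LinearMap.finrank_range_add_finrank_ker f
  rw [LinearMap.range_eq_top.2 hsurj, finrank_top, Module.finrank_prod, Module.finrank_self] at hdim
  have hmono := Submodule.finrank_mono hker
  rw [(Submodule.comapSubtypeEquivOfLe hle).finrank_eq] at hmono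
  unfold rank
  omega

theorem exists_rank_sub_add_two_le [NeZero (2 : k)] {M : Matrix n n k} (hM : Mᵀ = -M)
    (h0 : M ≠ 0) :
    ∃ u v : n → k, (M - (vecMulVec v u - vecMulVec u v)).rank + 2 ≤ M.rank := by
  classical
  obtain ⟨a, b, hab⟩ : ∃ a b, M a b ≠ 0 := by
    by_contra! H
    exact h0 (Matrix.ext H)
  have hskew : ∀ i j, M j i = -M i j := fun i j => congrFun (congrFun hM i) j
  have hdiag : ∀ i, M i i = 0 := fun i => by
    have := two_mul (M i i)
    rw [← sub_neg_eq_add, ← hskew, sub_self] at this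
    exact (mul_eq_zero.1 this).resolve_left two_ne_zero
  let u : n → k := fun i => M i a
  let v : n → k := fun i => -(M i b) / M a b
  have hfactor : M - (vecMulVec v u - vecMulVec u v) =
      M * (1 + vecMulVec (Pi.single b (M a b)⁻¹) u + vecMulVec (Pi.single a 1) v) := by
    ext i j
    simp [Matrix.mul_add, mul_vecMulVec, vecMulVec_apply, u, v, div_eq_mul_inv, sub_eq_add_neg,
      mul_right_comm, add_comm, add_assoc]
  refine ⟨u, v, rank_add_two_le_of_range_le ?_ (hdiag a) (hdiag b) hab
    (by rw [hskew a b]; exact neg_ne_zero.2 hab) (fun j => ?_) (fun j => ?_)⟩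
  · rw [hfactor, mulVecLin_mul]
    exact LinearMap.range_comp_le_range _ _
  · simp [vecMulVec_apply, u, v, hdiag, hskew a j, hab]
  · simp only [Matrix.sub_apply, vecMulVec_apply, u, v, hdiag, hskew a b, hskew b j]
    field_simp
    ring

theorem eq_zero_of_rank_eq_zero {M : Matrix n n k} (h : M.rank = 0) : M = 0 := by
  classical
  rw [rank, Submodule.finrank_eq_zero, LinearMap.range_eq_bot] at h
  ext i j
  simpa using congrFun (LinearMap.congr_fun h (Pi.single j 1)) i

theorem exists_eq_mul_transpose_sub [NeZero (2 : k)] (r : ℕ) {M : Matrix n n k} (hM : Mᵀ = -M)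
    (hr : M.rank ≤ 2 * r) : ∃ U V : Matrix n (Fin r) k, M = V * Uᵀ - U * Vᵀ := by
  induction r generalizing M with
  | zero => exact ⟨0, 0, by simp [eq_zero_of_rank_eq_zero (Nat.le_zero.1 hr)]⟩
  | succ r ih =>
    by_cases h0 : M = 0
    · exact ⟨0, 0, by simp [h0]⟩
    obtain ⟨u, v, hrank⟩ := exists_rank_sub_add_two_le hM h0
    obtain ⟨U, V, hUV⟩ := ih (M := M - (vecMulVec v u - vecMulVec u v))
      (by simp [hM, transpose_vecMulVec]; abel) (by omega)
    refine ⟨of fun i => Fin.cons (u i) (U i), of fun i => Fin.cons (v i) (V i), ?_⟩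
    rw [sub_eq_iff_eq_add.1 hUV]
    ext i j
    simp [mul_apply, Fin.sum_univ_succ, vecMulVec_apply]
    ring

theorem exists_eq_mul_J_mul_transpose [NeZero (2 : k)] [Fintype l] [DecidableEq l]
    {M : Matrix n n k} (hM : Mᵀ = -M) (hr : M.rank ≤ 2 * Fintype.card l) :
    ∃ A : Matrix n (l ⊕ l) k, M = A * J l k * Aᵀ := by
  obtain ⟨U, V, rfl⟩ := exists_eq_mul_transpose_sub _ hM hr
  let e := Fintype.equivFin l
  refine ⟨fromCols (U.submatrix id e) (V.submatrix id e), ?_⟩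
  rw [J, fromCols_mul_fromBlocks, transpose_fromCols, fromCols_mul_fromRows]
  simp [sub_eq_add_neg, submatrix_mul_equiv]

theorem exists_mul_J_mul_transpose_eq_of_isUnit_det [NeZero (2 : k)] [DecidableEq n] [Fintype l]
    [DecidableEq l]
    (hcard : Fintype.card n = 2 * Fintype.card l) {Ω : Matrix n n k} (hΩ : Ωᵀ = -Ω)
    (hu : IsUnit Ω.det) :
    ∃ (K : Matrix n (l ⊕ l) k) (K' : Matrix (l ⊕ l) n k),
      K * K' = 1 ∧ K' * K = 1 ∧ Ω = K * J l k * Kᵀ := by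
  obtain ⟨K, hK⟩ := exists_eq_mul_J_mul_transpose (l := l) hΩ
    ((rank_le_card_width Ω).trans hcard.le)
  have hinv : K * (J l k * Kᵀ * Ω⁻¹) = 1 := by
    rw [← Matrix.mul_assoc, ← Matrix.mul_assoc, ← hK, mul_nonsing_inv _ hu]
  refine ⟨K, _, hinv, ?_, hK⟩
  exact (mul_eq_one_comm_of_card_eq _ _ _
    (by rw [hcard, Fintype.card_sum, two_mul])).1 hinv

theorem exists_eq_mul_mul_transpose {c : Type*} [NeZero (2 : k)] [Fintype c] [DecidableEq c]
    {Ω : Matrix c c k} (hΩ : Ωᵀ = -Ω) (hu : IsUnit Ω.det) (hc : Even (Fintype.card c))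
    {M : Matrix n n k} (hM : Mᵀ = -M) (hr : M.rank ≤ Fintype.card c) :
    ∃ A : Matrix n c k, M = A * Ω * Aᵀ := by
  obtain ⟨r, hcard⟩ := hc.two_dvd
  obtain ⟨A, rfl⟩ := exists_eq_mul_J_mul_transpose (l := Fin r) hM (by simpa [← hcard] using hr)
  obtain ⟨K, K', -, hK'K, rfl⟩ :=
    exists_mul_J_mul_transpose_eq_of_isUnit_det (l := Fin r) (by simpa using hcard) hΩ hu
  have hKt : Kᵀ * K'ᵀ = 1 := by rw [← transpose_mul, hK'K, transpose_one]
  refine ⟨A * K', ?_⟩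
  calc A * J (Fin r) k * Aᵀ = A * (K' * K) * J (Fin r) k * (Kᵀ * K'ᵀ) * Aᵀ := by
        rw [hK'K, hKt]; simp
    _ = A * K' * (K * J (Fin r) k * Kᵀ) * (A * K')ᵀ := by
        simp only [transpose_mul, Matrix.mul_assoc]

end SkewNormalForm

/-! ### Jordan types relative to a symplectic form -/

section JordanType

variable {k m n : Type*} [Field k]

theorem rank_mul_mul_le {m' n' : Type*} [Fintype m] [Fintype n] [Fintype n']
    (A : Matrix m' m k) (B : Matrix m n k) (C : Matrix n n' k) : (A * B * C).rank ≤ B.rank :=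
  (rank_mul_le_left _ _).trans (rank_mul_le_right _ _)

theorem rank_fromBlocks_zero_zero {m' n' : Type*} [Fintype n] [Fintype n']
    (A : Matrix m n k) (D : Matrix m' n' k) :
    (fromBlocks A 0 0 D).rank = A.rank + D.rank := by
  let φ : (LinearMap.range A.mulVecLin × LinearMap.range D.mulVecLin) →ₗ[k] (m ⊕ m' → k) :=
    (LinearEquiv.sumArrowLequivProdArrow m m' k k).symm.toLinearMap.comp
      ((LinearMap.range A.mulVecLin).subtype.prodMap (LinearMap.range D.mulVecLin).subtype)
  have hinj : Function.Injective φ :=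
    (LinearEquiv.sumArrowLequivProdArrow m m' k k).symm.injective.comp <|
      Subtype.val_injective.prodMap Subtype.val_injective
  have hrange : LinearMap.range φ = LinearMap.range (fromBlocks A 0 0 D).mulVecLin := by
    apply le_antisymm
    · rintro _ ⟨⟨⟨_, ⟨x, rfl⟩⟩, ⟨_, ⟨y, rfl⟩⟩⟩, rfl⟩
      refine ⟨Sum.elim x y, ?_⟩
      ext (i | i) <;> simp [φ, fromBlocks_mulVec]
    · rintro _ ⟨x, rfl⟩
      refine ⟨⟨⟨A *ᵥ (x ∘ Sum.inl), ⟨_, rfl⟩⟩, ⟨D *ᵥ (x ∘ Sum.inr), ⟨_, rfl⟩⟩⟩, ?_⟩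
      ext (i | i) <;> simp [φ, fromBlocks_mulVec]
  rw [rank, ← hrange, LinearMap.finrank_range_of_inj hinj, Module.finrank_prod]
  rfl

/-- `X` has the ranks of powers of a nilpotent matrix whose Jordan blocks have the sizes listed in
`s`. The exponent `0` is included, so the size of `X` is `s.sum`. -/
def HasJordanType [Fintype n] [DecidableEq n] (X : Matrix n n k) (s : Multiset ℕ) : Prop :=
  ∀ i : ℕ, (X ^ i).rank = (s.map (· - i)).sum

namespace HasJordanType

variable [Fintype m] [DecidableEq m] [Fintype n] [DecidableEq n] {X : Matrix n n k}
  {s : Multiset ℕ}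

theorem card_eq (h : HasJordanType X s) : Fintype.card n = s.sum := by
  simpa using h 0

theorem neg (h : HasJordanType X s) : HasJordanType (-X) s := fun i => by
  have hrank : ((-X) ^ i).rank = (X ^ i).rank := by
    rcases Nat.even_or_odd i with hi | hi
    · rw [hi.neg_pow]
    · rw [hi.neg_pow, ← neg_one_smul k (X ^ i), rank_smul_of_mem_nonZeroDivisors]
      simp
  rw [hrank, h i]

theorem transpose (h : HasJordanType X s) : HasJordanType Xᵀ s := fun i => by
  rw [← transpose_pow, rank_transpose, h i]

theorem fromBlocks {Y : Matrix m m k} {t : Multiset ℕ} (hX : HasJordanType X s)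
    (hY : HasJordanType Y t) : HasJordanType (fromBlocks X 0 0 Y) (s + t) := fun i => by
  rw [fromBlocks_diagonal_pow, rank_fromBlocks_zero_zero, hX i, hY i, Multiset.map_add,
    Multiset.sum_add]

theorem conj (h : HasJordanType X s) {K : Matrix n m k} {K' : Matrix m n k} (hK : K * K' = 1)
    (hK' : K' * K = 1) : HasJordanType (K' * X * K) s := fun i => by
  have hpow : (K' * X * K) ^ i = K' * X ^ i * K := by
    induction i with
    | zero => simp [hK']
    | succ i ih =>
      calc (K' * X * K) ^ (i + 1) = K' * X ^ i * (K * K') * X * K := by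
            rw [pow_succ, ih]; simp only [Matrix.mul_assoc]
        _ = K' * X ^ (i + 1) * K := by
          rw [hK, pow_succ]; simp only [Matrix.mul_assoc, Matrix.one_mul]
  have hpow' : X ^ i = K * (K' * X ^ i * K) * K' := by
    calc X ^ i = (K * K') * X ^ i * (K * K') := by rw [hK]; simp
      _ = K * (K' * X ^ i * K) * K' := by simp only [Matrix.mul_assoc]
  rw [hpow, ← h i]
  apply le_antisymm
  · exact rank_mul_mul_le _ _ _
  · conv_lhs => rw [hpow']
    exact rank_mul_mul_le _ _ _

theorem congr {Ω G : Matrix n n k} {Ω' : Matrix m m k} (h : HasJordanType (Ω * G) s)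
    {K : Matrix n m k} {K' : Matrix m n k} (hK : K * K' = 1) (hK' : K' * K = 1)
    (hΩ : K * Ω' * Kᵀ = Ω) : HasJordanType (Ω' * (Kᵀ * G * K)) s := by
  have hconj : Ω' * (Kᵀ * G * K) = K' * (Ω * G) * K := by
    calc Ω' * (Kᵀ * G * K) = (K' * K) * Ω' * Kᵀ * G * K := by
          rw [hK']; simp only [Matrix.mul_assoc, Matrix.one_mul]
      _ = K' * (Ω * G) * K := by rw [← hΩ]; simp only [Matrix.mul_assoc]
  exact hconj ▸ h.conj hK hK'

end HasJordanType

variable (k) in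
/-- The nilpotent Jordan block of size `d`. -/
def shiftMatrix (d : ℕ) : Matrix (Fin d) (Fin d) k :=
  of fun a b => if (b : ℕ) = a + 1 then 1 else 0

theorem shiftMatrix_pow_apply (d i : ℕ) (a b : Fin d) :
    (shiftMatrix k d ^ i) a b = if (b : ℕ) = a + i then 1 else 0 := by
  induction i generalizing a with
  | zero => simp [one_apply, Fin.ext_iff, eq_comm]
  | succ i ih =>
    have hS : ∀ c, shiftMatrix k d a c = if (c : ℕ) = a + 1 then 1 else 0 := fun _ => rfl
    simp only [pow_succ', mul_apply, ih, hS, ite_mul, one_mul, zero_mul]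
    by_cases ha : (a : ℕ) + 1 < d
    · rw [Finset.sum_eq_single ⟨a + 1, ha⟩ (fun c _ hc => if_neg fun h => hc (Fin.ext h)) (by simp)]
      simp [add_assoc, add_comm 1]
    · rw [if_neg (by omega)]
      exact Finset.sum_eq_zero fun c _ => if_neg (by omega)

theorem hasJordanType_shiftMatrix (d : ℕ) : HasJordanType (shiftMatrix k d) {d} := fun i => by
  rw [Multiset.map_singleton, Multiset.sum_singleton]
  apply le_antisymm
  · have hsupp : Function.support (shiftMatrix k d ^ i).row ⊆
        Finset.univ.filter fun a : Fin d => (a : ℕ) < d - i := by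
      intro a ha
      by_contra hna
      refine ha (funext fun b => ?_)
      have : ¬ (b : ℕ) = a + i := fun hb => hna (by simp; omega)
      simp [row, shiftMatrix_pow_apply, this]
    refine (rank_le_card_of_support_subset _ _ hsupp).trans ?_
    rw [Fin.card_filter_val_lt]
    omega
  · rcases lt_or_ge d i with hi | hi
    · omega
    · have hsub : (shiftMatrix k d ^ i).submatrix (fun a : Fin (d - i) => (⟨a, by omega⟩ : Fin d))
          (fun a : Fin (d - i) => (⟨a + i, by omega⟩ : Fin d)) = 1 := by
        ext a b
        simp [shiftMatrix_pow_apply, one_apply, Fin.ext_iff, eq_comm]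
      have hle := rank_submatrix_le (shiftMatrix k d ^ i)
        (fun a : Fin (d - i) => (⟨a, by omega⟩ : Fin d))
        (fun a : Fin (d - i) => (⟨a + i, by omega⟩ : Fin d))
      rwa [hsub, rank_one, Fintype.card_fin] at hle

variable (k) in
/-- The permutation matrix which reverses the standard basis. -/
def reversalMatrix (d : ℕ) : Matrix (Fin d) (Fin d) k :=
  of fun a b => if b = a.rev then 1 else 0

variable (k) in
/-- The diagonal matrix of alternating signs. -/
def signMatrix (d : ℕ) : Matrix (Fin d) (Fin d) k :=
  diagonal fun a => (-1) ^ (a : ℕ)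

theorem reversalMatrix_mul_apply {d : ℕ} (X : Matrix (Fin d) (Fin d) k) (a b : Fin d) :
    (reversalMatrix k d * X) a b = X a.rev b := by
  simp [reversalMatrix, mul_apply]

theorem mul_reversalMatrix_apply {d : ℕ} (X : Matrix (Fin d) (Fin d) k) (a b : Fin d) :
    (X * reversalMatrix k d) a b = X a b.rev := by
  simp [reversalMatrix, mul_apply, ← Fin.rev_eq_iff]

theorem transpose_reversalMatrix (d : ℕ) : (reversalMatrix k d)ᵀ = reversalMatrix k d := by
  ext a b
  exact if_congr ⟨fun h => by simp [h], fun h => by simp [h]⟩ rfl rfl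

theorem reversalMatrix_mul_self (d : ℕ) : reversalMatrix k d * reversalMatrix k d = 1 := by
  ext a b
  rw [reversalMatrix_mul_apply]
  simp [reversalMatrix, one_apply, eq_comm]

theorem signMatrix_mul_self (d : ℕ) : signMatrix k d * signMatrix k d = 1 := by
  simp [signMatrix, ← mul_pow]

theorem reversalMatrix_mul_signMatrix {d : ℕ} (hd : Even d) :
    reversalMatrix k d * signMatrix k d = -(signMatrix k d * reversalMatrix k d) := by
  ext a b
  have hsign : (-1 : k) ^ (b : ℕ) = -(-1) ^ (b.rev : ℕ) := by
    rw [Fin.val_rev]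
    rcases Nat.even_or_odd (b : ℕ) with hb | hb
    · rw [hb.neg_one_pow, Odd.neg_one_pow (by grind), neg_neg]
    · rw [hb.neg_one_pow, Even.neg_one_pow (by grind)]
  rw [reversalMatrix_mul_apply, Matrix.neg_apply, mul_reversalMatrix_apply, signMatrix]
  by_cases hab : a = b.rev
  · simp [hab, hsign]
  · simp [hab, Fin.rev_eq_iff]

theorem shiftMatrix_mul_signMatrix (d : ℕ) :
    shiftMatrix k d * signMatrix k d = -(signMatrix k d * shiftMatrix k d) := by
  ext a b
  by_cases hab : (b : ℕ) = a + 1 <;> simp [signMatrix, shiftMatrix, hab, pow_succ]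

theorem transpose_shiftMatrix_mul_reversalMatrix (d : ℕ) :
    (shiftMatrix k d)ᵀ * reversalMatrix k d = reversalMatrix k d * shiftMatrix k d := by
  ext a b
  rw [mul_reversalMatrix_apply, reversalMatrix_mul_apply]
  exact if_congr (by rw [Fin.val_rev, Fin.val_rev]; omega) rfl rfl

variable (k) in
/-- `s` is the Jordan type of an element of some symplectic Lie algebra, written as the product of
an invertible skew matrix and a symmetric one. -/
def RealizesJordanType (s : Multiset ℕ) : Prop :=
  ∃ (ι : Type) (_ : Fintype ι) (_ : DecidableEq ι) (Ω G : Matrix ι ι k),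
    Ωᵀ = -Ω ∧ IsUnit Ω.det ∧ G.IsSymm ∧ HasJordanType (Ω * G) s

namespace RealizesJordanType

theorem add {s t : Multiset ℕ} (hs : RealizesJordanType k s) (ht : RealizesJordanType k t) :
    RealizesJordanType k (s + t) := by
  obtain ⟨ι, _, _, Ω, G, hΩ, hdet, hG, hX⟩ := hs
  obtain ⟨ι', _, _, Ω', G', hΩ', hdet', hG', hX'⟩ := ht
  refine ⟨ι ⊕ ι', inferInstance, inferInstance, fromBlocks Ω 0 0 Ω', fromBlocks G 0 0 G', ?_, ?_,
    hG.fromBlocks (by simp) hG', ?_⟩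
  · simp [fromBlocks_transpose, hΩ, hΩ', fromBlocks_neg]
  · rw [det_fromBlocks_zero₂₁]
    exact hdet.mul hdet'
  · simpa [fromBlocks_multiply] using hX.fromBlocks hX'

theorem zero : RealizesJordanType k 0 :=
  ⟨Fin 0, inferInstance, inferInstance, 0, 0, by simp, by simp, by simp, fun i =>
    Nat.le_zero.1 (rank_le_card_width _)⟩

theorem nsmul {s : Multiset ℕ} (hs : RealizesJordanType k s) (c : ℕ) :
    RealizesJordanType k (c • s) := by
  induction c with
  | zero => simpa using zero
  | succ c ih => simpa [succ_nsmul] using ih.add hs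

theorem pair (d : ℕ) : RealizesJordanType k ({d} + {d}) := by
  refine ⟨Fin d ⊕ Fin d, inferInstance, inferInstance, J (Fin d) k,
    fromBlocks 0 (shiftMatrix k d)ᵀ (shiftMatrix k d) 0, J_transpose _ _, isUnit_det_J _ _,
    isSymm_fromBlocks_iff.2 (by simp), ?_⟩
  have hS := hasJordanType_shiftMatrix (k := k) d
  simpa [J, fromBlocks_multiply] using hS.neg.fromBlocks hS.transpose

theorem even {d : ℕ} (hd : Even d) : RealizesJordanType k {d} := by
  set D := signMatrix k d
  set R := reversalMatrix k d
  set S := shiftMatrix k d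
  have hDD : D * D = 1 := signMatrix_mul_self d
  have hRR : R * R = 1 := reversalMatrix_mul_self d
  have hDt : Dᵀ = D := diagonal_transpose _
  have hRt : Rᵀ = R := transpose_reversalMatrix d
  have hRD : R * D = -(D * R) := reversalMatrix_mul_signMatrix hd
  have hSD : S * D = -(D * S) := shiftMatrix_mul_signMatrix d
  have hSR : Sᵀ * R = R * S := transpose_shiftMatrix_mul_reversalMatrix d
  refine ⟨Fin d, inferInstance, inferInstance, D * R, D * R * S, ?_, ?_, ?_, ?_⟩
  · rw [transpose_mul, hDt, hRt, hRD]
  · rw [det_mul]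
    exact (isUnit_det_of_left_inverse hDD).mul (isUnit_det_of_left_inverse hRR)
  · calc (D * R * S)ᵀ = Sᵀ * R * D := by
          rw [transpose_mul, transpose_mul, hDt, hRt, Matrix.mul_assoc]
      _ = -(R * D * S) := by
          rw [hSR, Matrix.mul_assoc, hSD, Matrix.mul_neg, Matrix.mul_assoc]
      _ = D * R * S := by rw [hRD, Matrix.neg_mul, neg_neg]
  · have hneg : D * R * (D * R * S) = -S := by
      calc D * R * (D * R * S) = D * (R * D) * R * S := by simp only [Matrix.mul_assoc]
        _ = -((D * D) * (R * R) * S) := by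
            rw [hRD]; simp only [Matrix.mul_neg, Matrix.neg_mul, Matrix.mul_assoc]
        _ = -S := by rw [hDD, hRR, Matrix.one_mul, Matrix.one_mul]
    rw [hneg]
    exact (hasJordanType_shiftMatrix d).neg

end RealizesJordanType

theorem realizesJordanType_of_even_count {s : Multiset ℕ} (hs : ∀ d, Odd d → Even (s.count d)) :
    RealizesJordanType k s := by
  rw [← s.toFinset_sum_count_nsmul_eq]
  refine Finset.sum_induction _ (RealizesJordanType k) (fun _ _ => .add) .zero fun d _ => ?_
  rcases Nat.even_or_odd d with hd | hd
  · exact (RealizesJordanType.even hd).nsmul _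
  · obtain ⟨c, hc⟩ := hs d hd
    rw [hc, add_nsmul, ← nsmul_add]
    exact (RealizesJordanType.pair d).nsmul c

end JordanType

/-! ### Symmetric forms in general position -/

section GeneralPosition

variable {k l n : Type*} [Field k] [Fintype n]

theorem add_transpose_eq_zero_of_forall_dotProduct_mulVec {Y : Matrix n n k}
    (h : ∀ w : n → k, w ⬝ᵥ Y *ᵥ w = 0) : Y + Yᵀ = 0 := by
  classical
  have hdiag : ∀ i, Y i i = 0 := fun i => by simpa using h (Pi.single i 1)
  ext i j
  have hij := h (Pi.single i 1 + Pi.single j 1)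
  simpa [Matrix.mulVec_add, hdiag, add_comm] using hij

theorem exists_forall_ne_zero_and_dotProduct_mulVec_ne_zero [Infinite k] [NeZero (2 : k)]
    {H : Matrix n n k} (hH : H.IsSymm) (h0 : H ≠ 0) :
    ∃ w : n → k, (∀ i, w i ≠ 0) ∧ w ⬝ᵥ H *ᵥ w ≠ 0 := by
  let q : MvPolynomial n k :=
    ∑ i, MvPolynomial.X i * ∑ j, MvPolynomial.C (H i j) * MvPolynomial.X j
  have hq : ∀ w, MvPolynomial.eval w q = w ⬝ᵥ H *ᵥ w := fun w => by
    simp [q, dotProduct, mulVec]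
  have hq0 : q ≠ 0 := fun hzero => by
    have hadd : H + Hᵀ = 0 :=
      add_transpose_eq_zero_of_forall_dotProduct_mulVec fun w => by rw [← hq, hzero, map_zero]
    rw [hH.eq, ← two_smul k] at hadd
    exact h0 ((smul_eq_zero.1 hadd).resolve_left two_ne_zero)
  have hprod : (∏ i, MvPolynomial.X i) * q ≠ 0 :=
    mul_ne_zero (Finset.prod_ne_zero_iff.2 fun i _ => MvPolynomial.X_ne_zero i) hq0
  obtain ⟨w, hw⟩ : ∃ w, MvPolynomial.eval w ((∏ i, MvPolynomial.X i) * q) ≠ 0 := by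
    by_contra! hzero
    exact hprod (MvPolynomial.funext fun w => by rw [hzero, map_zero])
  rw [map_mul, map_prod, hq] at hw
  refine ⟨w, fun i => ?_, right_ne_zero_of_mul hw⟩
  simpa using Finset.prod_ne_zero_iff.1 (left_ne_zero_of_mul hw) i (Finset.mem_univ i)

theorem dotProduct_mulVec_self_eq_zero [NeZero (2 : k)] {Ω : Matrix n n k} (hΩ : Ωᵀ = -Ω)
    (w : n → k) : w ⬝ᵥ Ω *ᵥ w = 0 := by
  have hneg : w ⬝ᵥ Ω *ᵥ w = -(w ⬝ᵥ Ω *ᵥ w) := by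
    conv_lhs => rw [dotProduct_mulVec, dotProduct_comm, ← mulVec_transpose, hΩ, neg_mulVec,
      dotProduct_neg]
  have h2 : 2 * (w ⬝ᵥ Ω *ᵥ w) = 0 := by
    rw [two_mul]
    exact eq_neg_iff_add_eq_zero.1 hneg
  exact (mul_eq_zero.1 h2).resolve_left two_ne_zero

variable [DecidableEq n]

theorem one_add_smul_mul_mul_transpose_eq_self [NeZero (2 : k)] {Ω : Matrix n n k} (hΩ : Ωᵀ = -Ω)
    (w : n → k) (s : k) :
    (1 + s • (Ω * vecMulVec w w)) * Ω * (1 + s • (Ω * vecMulVec w w))ᵀ = Ω := by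
  have hW : vecMulVec w w * (Ω * (vecMulVec w w * Ω)) = 0 := by
    rw [← Matrix.mul_assoc Ω, mul_vecMulVec, ← Matrix.mul_assoc, vecMulVec_mul_vecMulVec,
      dotProduct_mulVec_self_eq_zero hΩ]
    simp
  rw [transpose_add, transpose_one, transpose_smul, transpose_mul, hΩ, transpose_vecMulVec]
  simp [Matrix.add_mul, Matrix.mul_add, Matrix.mul_assoc, hW]

theorem eventually_add_mul_add_mul_sq_ne_zero {a b c : k} (hc : c ≠ 0) :
    ∀ᶠ s in Filter.cofinite, a + b * s + c * s ^ 2 ≠ 0 := by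
  let P : Polynomial k := .C a + .C b * .X + .C c * .X ^ 2
  have hP : P ≠ 0 := fun h => hc <| by
    have hcoeff := congrArg (Polynomial.coeff · 2) h
    simpa [P, Polynomial.coeff_X, Polynomial.coeff_C] using hcoeff
  filter_upwards [P.eventually_cofinite_not_isRoot hP] with s hs
  simpa [P, Polynomial.IsRoot] using hs

theorem exists_transpose_mul_mul_apply_self_ne_zero [Infinite k] [NeZero (2 : k)]
    {Ω G : Matrix n n k} (hΩ : Ωᵀ = -Ω) (hdet : IsUnit Ω.det) (hG : G.IsSymm) (h0 : G ≠ 0) :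
    ∃ g : Matrix n n k, g * Ω * gᵀ = Ω ∧ ∀ i, (gᵀ * G * g) i i ≠ 0 := by
  have hH0 : Ωᵀ * G * Ω ≠ 0 := fun h => h0 <| by
    calc G = (Ω⁻¹)ᵀ * (Ωᵀ * G * Ω) * Ω⁻¹ := by
          rw [transpose_nonsing_inv, Matrix.mul_assoc, mul_nonsing_inv_cancel_right _ _ hdet,
            nonsing_inv_mul_cancel_left _ _ (by rwa [det_transpose])]
      _ = 0 := by rw [h, Matrix.mul_zero, Matrix.zero_mul]
  obtain ⟨w, hw, hq⟩ := exists_forall_ne_zero_and_dotProduct_mulVec_ne_zero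
    (H := Ωᵀ * G * Ω) (by simp [IsSymm, hG.eq, Matrix.mul_assoc]) hH0
  set V : Matrix n n k := Ω * vecMulVec w w
  have hV : Vᵀ * G * V = (w ⬝ᵥ (Ωᵀ * G * Ω) *ᵥ w) • vecMulVec w w := by
    calc Vᵀ * G * V = vecMulVec w w * ((Ωᵀ * G * Ω) * vecMulVec w w) := by
          simp only [V, transpose_mul, transpose_vecMulVec, Matrix.mul_assoc]
      _ = (w ⬝ᵥ (Ωᵀ * G * Ω) *ᵥ w) • vecMulVec w w := by
          rw [mul_vecMulVec, vecMulVec_mul_vecMulVec, vecMulVec_smul]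
  -- For the transvection `g = 1 + s V`, the entries `(gᵀ G g) i i` have degree two in `s`.
  have hgen : ∀ i, ∀ᶠ s : k in Filter.cofinite,
      ((1 + s • V)ᵀ * G * (1 + s • V) : Matrix n n k) i i ≠ 0 := by
    intro i
    have hc : (Vᵀ * G * V) i i ≠ 0 := by
      rw [hV]
      simpa [vecMulVec_apply, hw i] using hq
    filter_upwards [eventually_add_mul_add_mul_sq_ne_zero (a := G i i)
      (b := (G * V) i i + (Vᵀ * G) i i) hc] with s hs
    convert hs using 1
    simp [Matrix.add_mul, Matrix.mul_add]
    ring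
  obtain ⟨s, hs⟩ := (Filter.eventually_all.2 hgen).exists
  exact ⟨1 + s • V, one_add_smul_mul_mul_transpose_eq_self hΩ w s, hs⟩

variable [Fintype l] [DecidableEq l]

/-- In each hyperbolic plane `⟨e_a, f_a⟩` of the standard symplectic space, `e_a` is anisotropic for
the symmetric form `G₁`, and the lines orthogonal to it for `G₁` and `G₂` are distinct. This is the
genericity which makes the motions of the base point transversal. -/
def InGeneralPosition (G₁ G₂ : Matrix (l ⊕ l) (l ⊕ l) k) : Prop :=
  ∀ a, G₁ (.inl a) (.inl a) ≠ 0 ∧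
    G₁ (.inl a) (.inl a) * G₂ (.inl a) (.inr a) ≠ G₂ (.inl a) (.inl a) * G₁ (.inl a) (.inr a)

theorem RealizesJordanType.exists_J_mul [NeZero (2 : k)] {s : Multiset ℕ}
    (h : RealizesJordanType k s) (hs : s.sum = 2 * Fintype.card l) :
    ∃ G : Matrix (l ⊕ l) (l ⊕ l) k, G.IsSymm ∧ HasJordanType (J l k * G) s := by
  obtain ⟨ι, _, _, Ω, G, hΩ, hdet, hG, hX⟩ := h
  obtain ⟨K, K', hK, hK', hKJ⟩ :=
    exists_mul_J_mul_transpose_eq_of_isUnit_det (hX.card_eq.trans hs) hΩ hdet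
  exact ⟨Kᵀ * G * K, by simp [IsSymm, hG.eq, Matrix.mul_assoc], hX.congr hK hK' hKJ.symm⟩

theorem HasJordanType.J_mul_congr {s : Multiset ℕ} {G g : Matrix (l ⊕ l) (l ⊕ l) k}
    (h : HasJordanType (J l k * G) s) (hg : g * J l k * gᵀ = J l k) :
    HasJordanType (J l k * (gᵀ * G * g)) s := by
  have hdet : IsUnit g.det := SymplecticGroup.symplectic_det (SymplecticGroup.mem_iff.2 hg)
  exact h.congr (mul_nonsing_inv _ hdet) (nonsing_inv_mul _ hdet) hg

theorem exists_inGeneralPosition [Infinite k] [NeZero (2 : k)] {s : Multiset ℕ}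
    (hs : ∀ d, Odd d → Even (s.count d)) (hsum : s.sum = 2 * Fintype.card l)
    (h1 : (s.map (· - 1)).sum ≠ 0) :
    ∃ G₁ G₂ : Matrix (l ⊕ l) (l ⊕ l) k, G₁.IsSymm ∧ G₂.IsSymm ∧ HasJordanType (J l k * G₁) s ∧
      HasJordanType (J l k * G₂) s ∧ InGeneralPosition G₁ G₂ := by
  obtain ⟨G, hG, hX⟩ := (realizesJordanType_of_even_count (k := k) hs).exists_J_mul hsum
  have hG0 : G ≠ 0 := by
    rintro rfl
    exact h1 (by simpa using (hX 1).symm)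
  obtain ⟨g, hg, hdiag⟩ :=
    exists_transpose_mul_mul_apply_self_ne_zero (J_transpose l k) (isUnit_det_J l k) hG hG0
  set G₁ := gᵀ * G * g with hG₁
  have hsymm : G₁.IsSymm := by simp [IsSymm, hG₁, hG.eq, Matrix.mul_assoc]
  set g' : Matrix (l ⊕ l) (l ⊕ l) k := fromBlocks 1 1 0 1
  have hg' : g' * J l k * g'ᵀ = J l k := by
    simp [g', J, fromBlocks_multiply, fromBlocks_transpose]
  have hll : ∀ a, (g'ᵀ * G₁ * g') (.inl a) (.inl a) = G₁ (.inl a) (.inl a) := fun a => by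
    rw [← fromBlocks_toBlocks G₁]
    simp [g', fromBlocks_transpose, fromBlocks_multiply]
  have hlr : ∀ a, (g'ᵀ * G₁ * g') (.inl a) (.inr a) =
      G₁ (.inl a) (.inl a) + G₁ (.inl a) (.inr a) := fun a => by
    rw [← fromBlocks_toBlocks G₁]
    simp [g', fromBlocks_transpose, fromBlocks_multiply]
  refine ⟨G₁, g'ᵀ * G₁ * g', hsymm, by simp [IsSymm, hsymm.eq, Matrix.mul_assoc],
    hX.J_mul_congr hg, (hX.J_mul_congr hg).J_mul_congr hg', fun a => ⟨hdiag _, ?_⟩⟩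
  rw [hll, hlr, mul_add, ne_eq, add_eq_right]
  exact mul_ne_zero (hdiag _) (hdiag _)

end GeneralPosition

/-! ### Gram matrices -/

section Gram

variable {k l n : Type*} [Field k]

section

variable [Fintype n] [DecidableEq n]

theorem eventually_isUnit_det_add_smul_add_sq_smul {M₀ : Matrix n n k}
    (h : IsUnit M₀.det) (M₁ M₂ : Matrix n n k) :
    ∀ᶠ s : k in Filter.cofinite, IsUnit (M₀ + s • M₁ + s ^ 2 • M₂).det := by
  let F : Polynomial k := (of fun i j => Polynomial.C (M₀ i j) + .C (M₁ i j) * .X +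
    .C (M₂ i j) * .X ^ 2).det
  have hF : ∀ s, F.eval s = (M₀ + s • M₁ + s ^ 2 • M₂).det := fun s => by
    rw [← Polynomial.coe_evalRingHom, RingHom.map_det]
    congr 1
    ext i j
    simp [mul_comm (M₁ i j), mul_comm (M₂ i j)]
  have hF0 : F ≠ 0 := fun hzero => h.ne_zero <| by simpa [hzero] using (hF 0).symm
  filter_upwards [F.eventually_cofinite_not_isRoot hF0] with s hs
  rw [isUnit_iff_ne_zero, ← hF]
  exact hs

theorem exists_isUnit_det_fromBlocks_smul [Infinite k] {B : Matrix n n k} (hB : IsUnit B.det)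
    (G₁ G₂ : Matrix n n k) :
    ∃ c : k, c ≠ 0 ∧ IsUnit (fromBlocks G₁ (c • B) (c • B)ᵀ G₂).det := by
  have h0 : IsUnit (fromBlocks 0 B Bᵀ 0).det :=
    isUnit_det_of_right_inverse (B := fromBlocks 0 Bᵀ⁻¹ B⁻¹ 0) <| by
      simp [fromBlocks_multiply, mul_nonsing_inv _ hB,
        mul_nonsing_inv Bᵀ (by rwa [det_transpose])]
  obtain ⟨s, hs, hs0⟩ :=
    ((eventually_isUnit_det_add_smul_add_sq_smul h0 (fromBlocks G₁ 0 0 G₂) 0).and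
      (Filter.eventually_cofinite_ne 0)).exists
  have hblocks : fromBlocks 0 B Bᵀ 0 + s • fromBlocks G₁ 0 0 G₂ + s ^ 2 • 0 =
      s • fromBlocks G₁ (s⁻¹ • B) (s⁻¹ • B)ᵀ G₂ := by
    simp [fromBlocks_smul, fromBlocks_add, hs0]
  rw [hblocks, det_smul] at hs
  exact ⟨s⁻¹, inv_ne_zero hs0, isUnit_of_mul_isUnit_right hs⟩

theorem exists_transpose_mul_diagonal_mul_eq [NeZero (2 : k)] {G : Matrix n n k} (hG : G.IsSymm) :
    ∃ (d : n → k) (P : Matrix n n k), Pᵀ * diagonal d * P = G := by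
  have : Invertible (2 : k) := invertibleOfNonzero two_ne_zero
  have hsymm : LinearMap.IsSymm (toBilin' G) := ⟨fun x y => by
    rw [RingHom.id_apply, toBilin'_apply', toBilin'_apply', dotProduct_mulVec, dotProduct_comm,
      ← mulVec_transpose, hG.eq]⟩
  obtain ⟨v, hv⟩ := LinearMap.BilinForm.exists_orthogonal_basis hsymm
  let w := v.reindex ((finCongr (by simp)).trans (Fintype.equivFin n).symm)
  have hw : LinearMap.BilinForm.toMatrix w (toBilin' G) =
      diagonal fun i => toBilin' G (w i) (w i) := by
    ext i j
    rw [LinearMap.BilinForm.toMatrix_apply, diagonal_apply]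
    split_ifs with hij
    · rw [hij]
    · simpa [w] using hv (by simpa using hij)
  refine ⟨fun i => toBilin' G (w i) (w i), w.toMatrix (Pi.basisFun k n), ?_⟩
  rw [← hw, LinearMap.BilinForm.toMatrix_mul_basis_toMatrix, LinearMap.BilinForm.toMatrix_basisFun]
  exact LinearMap.BilinForm.toMatrix'_toBilin' G

theorem rank_mul_mul_transpose_pow_succ {r : Type*} [Fintype r] [DecidableEq r] {A : Matrix r n k}
    {A' : Matrix n r k} (hA : A' * A = 1) {Ω : Matrix n n k} (hΩ : IsUnit Ω.det) (i : ℕ) :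
    ((A * Ω * Aᵀ) ^ (i + 1)).rank = ((Ω * (Aᵀ * A)) ^ i).rank := by
  have hpow : (A * Ω * Aᵀ) ^ (i + 1) = A * (Ω * (Aᵀ * A)) ^ i * (Ω * Aᵀ) := by
    induction i with
    | zero => simp [Matrix.mul_assoc]
    | succ i ih => rw [pow_succ, ih, pow_succ]; simp only [Matrix.mul_assoc]
  have hAt : Aᵀ * A'ᵀ = 1 := by rw [← transpose_mul, hA, transpose_one]
  have hpow' : (Ω * (Aᵀ * A)) ^ i = A' * (A * Ω * Aᵀ) ^ (i + 1) * (A'ᵀ * Ω⁻¹) := by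
    calc (Ω * (Aᵀ * A)) ^ i
        = (A' * A) * (Ω * (Aᵀ * A)) ^ i * (Ω * (Aᵀ * A'ᵀ) * Ω⁻¹) := by
          rw [hA, hAt, Matrix.mul_one, mul_nonsing_inv _ hΩ, Matrix.mul_one, Matrix.one_mul]
      _ = A' * (A * Ω * Aᵀ) ^ (i + 1) * (A'ᵀ * Ω⁻¹) := by
          rw [hpow]; simp only [Matrix.mul_assoc]
  apply le_antisymm
  · rw [hpow]
    exact rank_mul_mul_le _ _ _
  · rw [hpow']
    exact rank_mul_mul_le _ _ _

end

theorem exists_transpose_mul_self_eq [Fintype n] [NeZero (2 : k)] [IsAlgClosed k] {r : Type*}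
    [Fintype r] (hr : Fintype.card n ≤ Fintype.card r) {G : Matrix n n k} (hG : G.IsSymm) :
    ∃ A : Matrix r n k, Aᵀ * A = G := by
  classical
  obtain ⟨d, P, rfl⟩ := exists_transpose_mul_diagonal_mul_eq hG
  obtain ⟨f⟩ := Function.Embedding.nonempty_of_card_le hr
  choose e he using fun i => IsAlgClosed.exists_pow_nat_eq (d i) two_pos
  let E : Matrix r n k := (1 : Matrix r r k).submatrix id f
  have hE : Eᵀ * E = 1 := by
    rw [transpose_submatrix, transpose_one, ← submatrix_mul _ _ _ _ _ Function.bijective_id,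
      Matrix.mul_one, submatrix_one _ f.injective]
  have hd : diagonal d = diagonal e * diagonal e := by
    simp [← he, sq]
  refine ⟨E * (diagonal e * P), ?_⟩
  calc (E * (diagonal e * P))ᵀ * (E * (diagonal e * P))
      = Pᵀ * diagonal e * (Eᵀ * E) * (diagonal e * P) := by
        simp only [transpose_mul, diagonal_transpose, Matrix.mul_assoc]
    _ = Pᵀ * diagonal d * P := by rw [hE, hd, Matrix.mul_one]; simp only [Matrix.mul_assoc]

variable [DecidableEq l]

/-- The scalar matrices `d a` on the hyperbolic planes `⟨e_a, f_a⟩` of the standard symplectic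
space. -/
def planeDiagonal (d : l → k) : Matrix (l ⊕ l) (l ⊕ l) k :=
  fromBlocks (diagonal d) 0 0 (diagonal d)

theorem transpose_planeDiagonal (d : l → k) : (planeDiagonal d)ᵀ = planeDiagonal d := by
  simp [planeDiagonal]

theorem smul_planeDiagonal (c : k) (d : l → k) : c • planeDiagonal d = planeDiagonal (c • d) := by
  simp [planeDiagonal, fromBlocks_smul, -fromBlocks_diagonal, ← diagonal_smul]

variable [Fintype l]

theorem J_mul_planeDiagonal (d : l → k) : J l k * planeDiagonal d = planeDiagonal d * J l k := by
  simp [planeDiagonal, J, fromBlocks_multiply, -fromBlocks_diagonal]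

theorem isUnit_det_planeDiagonal {d : l → k} (hd : ∀ a, d a ≠ 0) :
    IsUnit (planeDiagonal d).det := by
  rw [planeDiagonal, det_fromBlocks_zero₂₁, det_diagonal, isUnit_iff_ne_zero, mul_self_ne_zero]
  exact Finset.prod_ne_zero_iff.2 fun a _ => hd a

theorem exists_eq_diagonal_of_mul_diagonal_eq {d : l → k} (hd0 : ∀ a, d a ≠ 0)
    (hd : Function.Injective fun a => d a ^ 2) {X Y : Matrix l l k}
    (h : X * diagonal d = diagonal d * Y) (h' : diagonal d * X = Y * diagonal d) :
    ∃ e, X = diagonal e ∧ Y = diagonal e := by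
  have hXY : ∀ a b, X a b * d b = d a * Y a b := fun a b => by simpa using congr($h a b)
  have hYX : ∀ a b, d a * X a b = Y a b * d b := fun a b => by simpa using congr($h' a b)
  have hX : ∀ a b, a ≠ b → X a b = 0 := fun a b hab => by
    have hmul : X a b * (d b ^ 2 - d a ^ 2) = 0 := by
      linear_combination d b * hXY a b - d a * hYX a b
    exact (mul_eq_zero.1 hmul).resolve_right (sub_ne_zero.2 fun hba => hab (hd hba.symm))
  have hY : ∀ a b, a ≠ b → Y a b = 0 := fun a b hab => by
    have hmul := hXY a b
    rw [hX a b hab, zero_mul] at hmul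
    exact (mul_eq_zero.1 hmul.symm).resolve_left (hd0 a)
  refine ⟨fun a => X a a, ?_, ?_⟩ <;> ext a b <;> rw [diagonal_apply] <;> split_ifs with hab
  · rw [hab]
  · exact hX a b hab
  · rw [← hab]
    exact mul_right_cancel₀ (hd0 a) ((hYX a a).symm.trans (mul_comm _ _))
  · exact hY a b hab

theorem exists_eq_fromBlocks_diagonal_of_mul_planeDiagonal_eq {d : l → k} (hd0 : ∀ a, d a ≠ 0)
    (hd : Function.Injective fun a => d a ^ 2) {C₁ C₂ : Matrix (l ⊕ l) (l ⊕ l) k}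
    (hC₁ : C₁.IsSymm) (hC₂ : C₂.IsSymm)
    (h : C₁ * planeDiagonal d = planeDiagonal d * C₂) :
    ∃ P Q R : l → k,
      C₁ = fromBlocks (diagonal P) (diagonal Q) (diagonal Q) (diagonal R) ∧ C₂ = C₁ := by
  have h' : planeDiagonal d * C₁ = C₂ * planeDiagonal d := by
    simpa [transpose_planeDiagonal, hC₁.eq, hC₂.eq] using congr($hᵀ)
  rw [← fromBlocks_toBlocks C₁] at hC₁ h h' ⊢
  rw [← fromBlocks_toBlocks C₂] at hC₂ h h' ⊢
  obtain ⟨-, hC₁, -, -⟩ := isSymm_fromBlocks_iff.1 hC₁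
  obtain ⟨-, hC₂, -, -⟩ := isSymm_fromBlocks_iff.1 hC₂
  simp only [planeDiagonal, fromBlocks_multiply, Matrix.mul_zero, Matrix.zero_mul, add_zero,
    zero_add, fromBlocks_inj] at h h'
  obtain ⟨P, hP, hP'⟩ := exists_eq_diagonal_of_mul_diagonal_eq hd0 hd h.1 h'.1
  obtain ⟨Q, hQ, hQ'⟩ := exists_eq_diagonal_of_mul_diagonal_eq hd0 hd h.2.1 h'.2.1
  obtain ⟨R, hR, hR'⟩ := exists_eq_diagonal_of_mul_diagonal_eq hd0 hd h.2.2.2 h'.2.2.2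
  refine ⟨P, Q, R, ?_, ?_⟩
  · rw [← hC₁, hP, hQ, hR, diagonal_transpose]
  · rw [← hC₁, ← hC₂, hP, hQ, hR, hP', hQ', hR']

theorem planar_equations_of_mul_mul_J_eq [NeZero (2 : k)] {P Q R : l → k}
    {G : Matrix (l ⊕ l) (l ⊕ l) k} (hG : G.IsSymm)
    (h : fromBlocks (diagonal P) (diagonal Q) (diagonal Q) (diagonal R) * G * J l k =
      J l k * G * fromBlocks (diagonal P) (diagonal Q) (diagonal Q) (diagonal R)) (a : l) :
    Q a * G (.inl a) (.inl a) + R a * G (.inl a) (.inr a) = 0 ∧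
      P a * G (.inl a) (.inl a) = R a * G (.inr a) (.inr a) := by
  have hG' : G (.inr a) (.inl a) = G (.inl a) (.inr a) := hG.apply _ _
  rw [← fromBlocks_toBlocks G, J] at h
  simp only [fromBlocks_multiply, Matrix.mul_zero, Matrix.zero_mul, add_zero, zero_add,
    Matrix.mul_one, Matrix.one_mul, Matrix.mul_neg, Matrix.neg_mul, fromBlocks_inj] at h
  have h12 := congr($(h.2.1) a a)
  have h22 := congr($(h.2.2.2) a a)
  simp only [toBlocks₁₁, toBlocks₁₂, toBlocks₂₁, toBlocks₂₂, Matrix.neg_apply, Matrix.add_apply,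
    diagonal_mul, mul_diagonal, of_apply, hG'] at h12 h22
  refine ⟨(mul_eq_zero.1 (?_ : (2 : k) * _ = 0)).resolve_left two_ne_zero, ?_⟩
  · linear_combination -h22
  · linear_combination -h12

/-- The equations say that a covector annihilates the infinitesimal motions of a base point with
Gram matrix `[[G₁, J D], [(J D)ᵀ, G₂]]`, where `D` is `planeDiagonal d`. -/
theorem InGeneralPosition.eq_zero_of_mul_mul_J_eq [NeZero (2 : k)] {d : l → k}
    (hd0 : ∀ a, d a ≠ 0) (hd : Function.Injective fun a => d a ^ 2)
    {G₁ G₂ C₁ C₂ : Matrix (l ⊕ l) (l ⊕ l) k} (hG : InGeneralPosition G₁ G₂)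
    (hG₁ : G₁.IsSymm) (hG₂ : G₂.IsSymm) (hC₁ : C₁.IsSymm) (hC₂ : C₂.IsSymm)
    (h₁ : C₁ * G₁ * J l k = J l k * G₁ * C₁) (h₂ : C₂ * G₂ * J l k = J l k * G₂ * C₂)
    (h₁₂ : C₁ * (J l k * planeDiagonal d) * J l k = J l k * (J l k * planeDiagonal d) * C₂) :
    C₁ = 0 ∧ C₂ = 0 := by
  have hCD : C₁ * planeDiagonal d = planeDiagonal d * C₂ := by
    rw [J_mul_planeDiagonal, ← Matrix.mul_assoc, Matrix.mul_assoc, J_squared,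
      ← J_mul_planeDiagonal, ← Matrix.mul_assoc, J_squared] at h₁₂
    simpa using h₁₂
  obtain ⟨P, Q, R, rfl, rfl⟩ :=
    exists_eq_fromBlocks_diagonal_of_mul_planeDiagonal_eq hd0 hd hC₁ hC₂ hCD
  have hzero : ∀ a, P a = 0 ∧ Q a = 0 ∧ R a = 0 := fun a => by
    obtain ⟨hQR₁, hPR⟩ := planar_equations_of_mul_mul_J_eq hG₁ h₁ a
    obtain ⟨hQR₂, -⟩ := planar_equations_of_mul_mul_J_eq hG₂ h₂ a
    obtain ⟨hll, hne⟩ := hG a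
    have hR : R a = 0 := by
      refine (mul_eq_zero.1 (?_ : R a * _ = 0)).resolve_right (sub_ne_zero.2 hne)
      linear_combination G₁ (.inl a) (.inl a) * hQR₂ - G₂ (.inl a) (.inl a) * hQR₁
    rw [hR] at hQR₁ hPR
    exact ⟨by simpa [hll] using hPR, by simpa [hll] using hQR₁, hR⟩
  obtain rfl : P = 0 := funext fun a => (hzero a).1
  obtain rfl : Q = 0 := funext fun a => (hzero a).2.1
  obtain rfl : R = 0 := funext fun a => (hzero a).2.2
  simp

end Gram

/-! ### Covectors annihilating the infinitesimal motions -/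

section Transversality

variable {k n : Type*} [Field k]

theorem eventually_injective_add_smul_add_sq_smul {V W : Type*} [AddCommGroup V]
    [Module k V] [FiniteDimensional k V] [AddCommGroup W] [Module k W] {φ₀ : V →ₗ[k] W}
    (h : Function.Injective φ₀) (φ₁ φ₂ : V →ₗ[k] W) :
    ∀ᶠ s : k in Filter.cofinite, Function.Injective (φ₀ + s • φ₁ + s ^ 2 • φ₂) := by
  obtain ⟨ψ, hψ⟩ := φ₀.exists_leftInverse_of_injective (LinearMap.ker_eq_bot.2 h)
  let b := Module.finBasis k V
  have h0 : IsUnit (LinearMap.toMatrix b b (ψ ∘ₗ φ₀)).det := by simp [hψ]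
  filter_upwards [eventually_isUnit_det_add_smul_add_sq_smul h0
    (LinearMap.toMatrix b b (ψ ∘ₗ φ₁)) (LinearMap.toMatrix b b (ψ ∘ₗ φ₂))] with s hs
  have hcomp : IsUnit (LinearMap.det (ψ ∘ₗ (φ₀ + s • φ₁ + s ^ 2 • φ₂))) := by
    rw [← LinearMap.det_toMatrix b]
    simpa [LinearMap.comp_add, LinearMap.comp_smul] using hs
  have hinj := LinearMap.ker_eq_bot.1
    ((LinearMap.isUnit_iff_ker_eq_bot _).1 ((LinearMap.isUnit_iff_isUnit_det _).2 hcomp))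
  rw [LinearMap.coe_comp] at hinj
  exact hinj.of_comp

variable [Fintype n] {ι₁ ι₂ l : Type*} [Fintype ι₁] [Fintype ι₂]

/-- The pairing `(A, L) ↦ (A₁L₁ᵀ - L₁A₁ᵀ, A₂L₂ᵀ - L₂A₂ᵀ, LᵀAΩ + (LᵀAΩ)ᵀ)` of matrices in two column
blocks. It vanishes exactly when the covector `L` annihilates the infinitesimal motions
`(X₁A₁, X₂A₂)` and `AΩS` of `A`, for `X₁`, `X₂` skew and `S` symmetric. -/
def tangentPairing (Ω : Matrix (ι₁ ⊕ ι₂) (ι₁ ⊕ ι₂) k) :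
    Matrix n (ι₁ ⊕ ι₂) k →ₗ[k] Matrix n (ι₁ ⊕ ι₂) k →ₗ[k]
      Matrix n n k × Matrix n n k × Matrix (ι₁ ⊕ ι₂) (ι₁ ⊕ ι₂) k :=
  LinearMap.mk₂ k
    (fun A L => (A.toCols₁ * L.toCols₁ᵀ - L.toCols₁ * A.toCols₁ᵀ,
      A.toCols₂ * L.toCols₂ᵀ - L.toCols₂ * A.toCols₂ᵀ, Lᵀ * A * Ω + (Lᵀ * A * Ω)ᵀ))
    (fun A A' L => by
      have h₁ : (A + A').toCols₁ = A.toCols₁ + A'.toCols₁ := rfl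
      have h₂ : (A + A').toCols₂ = A.toCols₂ + A'.toCols₂ := rfl
      simp only [h₁, h₂, transpose_add, Matrix.add_mul, Matrix.mul_add, Prod.mk_add_mk,
        add_sub_add_comm, add_add_add_comm])
    (fun c A L => by
      have h₁ : (c • A).toCols₁ = c • A.toCols₁ := rfl
      have h₂ : (c • A).toCols₂ = c • A.toCols₂ := rfl
      simp only [h₁, h₂, transpose_smul, Matrix.smul_mul, Matrix.mul_smul, Prod.smul_mk, smul_sub,
        smul_add])
    (fun A L L' => by
      have h₁ : (L + L').toCols₁ = L.toCols₁ + L'.toCols₁ := rfl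
      have h₂ : (L + L').toCols₂ = L.toCols₂ + L'.toCols₂ := rfl
      simp only [h₁, h₂, transpose_add, Matrix.add_mul, Matrix.mul_add, Prod.mk_add_mk,
        add_sub_add_comm, add_add_add_comm])
    (fun c A L => by
      have h₁ : (c • L).toCols₁ = c • L.toCols₁ := rfl
      have h₂ : (c • L).toCols₂ = c • L.toCols₂ := rfl
      simp only [h₁, h₂, transpose_smul, Matrix.smul_mul, Matrix.mul_smul, Prod.smul_mk, smul_sub,
        smul_add])

theorem tangentPairing_eq_zero_iff {Ω : Matrix (ι₁ ⊕ ι₂) (ι₁ ⊕ ι₂) k}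
    {A₁ L₁ : Matrix n ι₁ k} {A₂ L₂ : Matrix n ι₂ k} :
    tangentPairing Ω (fromCols A₁ A₂) (fromCols L₁ L₂) = 0 ↔
      A₁ * L₁ᵀ = L₁ * A₁ᵀ ∧ A₂ * L₂ᵀ = L₂ * A₂ᵀ ∧
        (fromCols L₁ L₂)ᵀ * fromCols A₁ A₂ * Ω +
          ((fromCols L₁ L₂)ᵀ * fromCols A₁ A₂ * Ω)ᵀ = 0 := by
  simp only [tangentPairing, LinearMap.mk₂_apply, toCols₁_fromCols, toCols₂_fromCols,
    Prod.mk_eq_zero, sub_eq_zero]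

theorem exists_isSymm_of_mul_transpose_eq [DecidableEq ι₁] {A L : Matrix n ι₁ k}
    {A' : Matrix ι₁ n k} (hA : A' * A = 1) (h : A * Lᵀ = L * Aᵀ) :
    ∃ C : Matrix ι₁ ι₁ k, C.IsSymm ∧ L = A * C := by
  have hLt : Lᵀ = A' * L * Aᵀ := by
    rw [Matrix.mul_assoc, ← h, ← Matrix.mul_assoc, hA, Matrix.one_mul]
  have hL : L = A * (A' * L)ᵀ := by
    simpa [transpose_mul, Matrix.mul_assoc] using congr($hLtᵀ)
  refine ⟨(A' * L)ᵀ, ?_, hL⟩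
  rw [IsSymm, transpose_transpose]
  conv_lhs => rw [hL, ← Matrix.mul_assoc, hA, Matrix.one_mul]

theorem InGeneralPosition.injective_tangentPairing [NeZero (2 : k)] [Fintype l] [DecidableEq l]
    {d : l → k} (hd0 : ∀ a, d a ≠ 0) (hd : Function.Injective fun a => d a ^ 2)
    {A₁ A₂ : Matrix n (l ⊕ l) k} {A₁' A₂' : Matrix (l ⊕ l) n k}
    (hA₁ : A₁' * A₁ = 1) (hA₂ : A₂' * A₂ = 1)
    (hG : InGeneralPosition (A₁ᵀ * A₁) (A₂ᵀ * A₂))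
    (h₁₂ : A₁ᵀ * A₂ = J l k * planeDiagonal d) :
    Function.Injective (tangentPairing (fromBlocks (J l k) 0 0 (J l k)) (fromCols A₁ A₂)) := by
  rw [← LinearMap.ker_eq_bot, LinearMap.ker_eq_bot']
  intro L hL
  rw [← fromCols_toCols L] at hL ⊢
  obtain ⟨hL₁, hL₂, hΩ⟩ := tangentPairing_eq_zero_iff.1 hL
  obtain ⟨C₁, hC₁, hLC₁⟩ := exists_isSymm_of_mul_transpose_eq hA₁ hL₁
  obtain ⟨C₂, hC₂, hLC₂⟩ := exists_isSymm_of_mul_transpose_eq hA₂ hL₂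
  rw [hLC₁, hLC₂, transpose_fromCols, fromRows_mul_fromCols, fromBlocks_multiply] at hΩ
  simp only [transpose_mul, Matrix.mul_assoc, hC₁.eq, hC₂.eq, Matrix.mul_zero, zero_add, add_zero,
    fromBlocks_transpose, fromBlocks_add, J_transpose, transpose_transpose] at hΩ
  rw [← fromBlocks_zero, fromBlocks_inj] at hΩ
  simp only [Matrix.neg_mul, add_neg_eq_zero] at hΩ
  obtain ⟨h₁, h₁₂', -, h₂⟩ := hΩ
  obtain ⟨rfl, rfl⟩ := hG.eq_zero_of_mul_mul_J_eq hd0 hd (transpose_mul _ _)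
    (transpose_mul _ _) hC₁ hC₂ (by simpa only [Matrix.mul_assoc] using h₁)
    (by simpa only [Matrix.mul_assoc] using h₂)
    (by simpa only [← h₁₂, Matrix.mul_assoc] using h₁₂')
  rw [hLC₁, hLC₂, Matrix.mul_zero, Matrix.mul_zero, fromCols_zero]

/-- The matrix is the exponential of the nilpotent skew matrix `s • x`. -/
theorem transpose_mul_self_one_add_smul_add_sq_smul [DecidableEq n] [NeZero (2 : k)]
    {x : Matrix n n k} (hx : xᵀ = -x) (hx3 : x * x * x = 0) (s : k) :
    (1 + s • x + s ^ 2 • (2⁻¹ : k) • (x * x))ᵀ * (1 + s • x + s ^ 2 • (2⁻¹ : k) • (x * x)) = 1 := by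
  have hx3' : x * (x * x) = 0 := by rw [← Matrix.mul_assoc, hx3]
  have hx4 : x * x * (x * x) = 0 := by rw [← Matrix.mul_assoc, hx3, Matrix.zero_mul]
  have ht : (1 + s • x + s ^ 2 • (2⁻¹ : k) • (x * x))ᵀ =
      1 - s • x + s ^ 2 • (2⁻¹ : k) • (x * x) := by
    simp [transpose_mul, hx, sub_eq_add_neg]
  rw [ht]
  simp only [Matrix.add_mul, Matrix.sub_mul, Matrix.mul_add, Matrix.one_mul, Matrix.mul_one,
    Matrix.smul_mul, Matrix.mul_smul, hx3, hx3', hx4, smul_zero, add_zero, sub_zero]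
  have h2 : (2⁻¹ : k) + 2⁻¹ = 1 := by rw [← two_mul, mul_inv_cancel₀ two_ne_zero]
  linear_combination (norm := module) (s ^ 2 * h2) • (x * x)

theorem dotProduct_mulVec_comm_of_forall_trace_mul_eq_zero {X : Matrix n n k}
    (h : ∀ x : Matrix n n k, xᵀ = -x → x * x * x = 0 → (x * X).trace = 0) {u v : n → k}
    (huu : u ⬝ᵥ u = 0) (huv : u ⬝ᵥ v = 0) : v ⬝ᵥ X *ᵥ u = u ⬝ᵥ X *ᵥ v := by
  have hvu : v ⬝ᵥ u = 0 := by rw [dotProduct_comm, huv]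
  have htr := h (vecMulVec u v - vecMulVec v u)
    (by rw [transpose_sub, transpose_vecMulVec, transpose_vecMulVec, neg_sub])
    (by simp [Matrix.sub_mul, Matrix.mul_sub, vecMulVec_mul_vecMulVec, huu, huv, hvu])
  rw [Matrix.sub_mul, trace_sub, vecMulVec_mul, vecMulVec_mul, trace_vecMulVec, trace_vecMulVec,
    sub_eq_zero] at htr
  rw [dotProduct_mulVec, dotProduct_mulVec, dotProduct_comm, htr, dotProduct_comm]

theorem isSymm_of_forall_trace_mul_eq_zero [NeZero (2 : k)] (hsq : IsSquare (-1 : k))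
    (hn : 3 ≤ Fintype.card n) {X : Matrix n n k}
    (h : ∀ x : Matrix n n k, xᵀ = -x → x * x * x = 0 → (x * X).trace = 0) : X.IsSymm := by
  classical
  obtain ⟨c, hc⟩ := hsq
  -- The isotropic vector `e_i + e • e_p` is orthogonal to `e_j`.
  have hrel : ∀ e : k, e * e = -1 → ∀ i j p : n, i ≠ j → i ≠ p → j ≠ p →
      X j i + e * X j p = X i j + e * X p j := by
    intro e he i j p hij hip hjp
    have huv := dotProduct_mulVec_comm_of_forall_trace_mul_eq_zero h
      (u := Pi.single i 1 + e • Pi.single p 1) (v := Pi.single j 1)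
      (by simp [hip, hip.symm, he]) (by simp [hij, hjp.symm])
    simpa [mulVec_add, mulVec_smul] using huv
  refine IsSymm.ext fun i j => ?_
  by_cases hij : i = j
  · rw [hij]
  · obtain ⟨p, hpi, hpj⟩ : ∃ p, p ≠ i ∧ p ≠ j := by
      obtain ⟨p, -, hp⟩ := Finset.exists_mem_notMem_of_card_lt_card
        (s := {i, j}) (t := Finset.univ) (Finset.card_le_two.trans_lt hn)
      exact ⟨p, by simpa using hp⟩
    have hpos := hrel c hc.symm i j p hij hpi.symm hpj.symm
    have hneg := hrel (-c) (by rw [neg_mul_neg, ← hc]) i j p hij hpi.symm hpj.symm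
    have h2 : (2 : k) * (X j i - X i j) = 0 := by linear_combination hpos + hneg
    exact sub_eq_zero.1 ((mul_eq_zero.1 h2).resolve_left two_ne_zero)

end Transversality

/-! ### Density of the orthogonal and symplectic motions -/

section OrbitDensity

variable {k n ι₁ ι₂ : Type*} [Field k] [Fintype n] [Fintype ι₁] [Fintype ι₂]

/-- The matrices obtained by a symplectic motion on the right from those matrices with column
blocks in `S₁` and `S₂` at which the infinitesimal motions are transverse. -/
def transverseFrames (Ω : Matrix (ι₁ ⊕ ι₂) (ι₁ ⊕ ι₂) k) (S₁ : Set (Matrix n ι₁ k))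
    (S₂ : Set (Matrix n ι₂ k)) : Set (Matrix n (ι₁ ⊕ ι₂) k) :=
  {A | ∃ B₁ ∈ S₁, ∃ B₂ ∈ S₂, ∃ g : Matrix (ι₁ ⊕ ι₂) (ι₁ ⊕ ι₂) k,
    g * Ω * gᵀ = Ω ∧ Function.Injective (tangentPairing Ω (fromCols B₁ B₂)) ∧
      fromCols B₁ B₂ * g = A}

theorem isArcTangent_transverseFrames_left [DecidableEq n] [Infinite k] [NeZero (2 : k)]
    {Ω g : Matrix (ι₁ ⊕ ι₂) (ι₁ ⊕ ι₂) k} {S₁ : Set (Matrix n ι₁ k)} {S₂ : Set (Matrix n ι₂ k)}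
    (hS₁ : ∀ h : Matrix n n k, hᵀ * h = 1 → ∀ A ∈ S₁, h * A ∈ S₁)
    (hS₂ : ∀ h : Matrix n n k, hᵀ * h = 1 → ∀ A ∈ S₂, h * A ∈ S₂)
    {B₁ : Matrix n ι₁ k} {B₂ : Matrix n ι₂ k} (hB₁ : B₁ ∈ S₁) (hB₂ : B₂ ∈ S₂)
    (hg : g * Ω * gᵀ = Ω) (hinj : Function.Injective (tangentPairing Ω (fromCols B₁ B₂)))
    {x₁ x₂ : Matrix n n k} (hx₁ : x₁ᵀ = -x₁) (hx₂ : x₂ᵀ = -x₂)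
    (hx₁3 : x₁ * x₁ * x₁ = 0) (hx₂3 : x₂ * x₂ * x₂ = 0) :
    IsArcTangent k (transverseFrames Ω S₁ S₂) (fromCols B₁ B₂ * g)
      (fromCols (x₁ * B₁) (x₂ * B₂) * g) := by
  set V := fromCols (x₁ * B₁) (x₂ * B₂) with hV
  set W := fromCols ((2⁻¹ : k) • (x₁ * x₁) * B₁) ((2⁻¹ : k) • (x₂ * x₂) * B₂) with hW
  refine ⟨W * g, ?_⟩
  filter_upwards [eventually_injective_add_smul_add_sq_smul hinj (tangentPairing Ω V)
    (tangentPairing Ω W)] with s hs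
  have harc : fromCols ((1 + s • x₁ + s ^ 2 • (2⁻¹ : k) • (x₁ * x₁)) * B₁)
      ((1 + s • x₂ + s ^ 2 • (2⁻¹ : k) • (x₂ * x₂)) * B₂) =
        fromCols B₁ B₂ + s • V + s ^ 2 • W := by
    ext i (j | j) <;> simp [hV, hW, Matrix.add_mul]
  refine ⟨_, hS₁ _ (transpose_mul_self_one_add_smul_add_sq_smul hx₁ hx₁3 s) _ hB₁,
    _, hS₂ _ (transpose_mul_self_one_add_smul_add_sq_smul hx₂ hx₂3 s) _ hB₂, g, hg, ?_, ?_⟩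
  · rw [harc, map_add, map_add, map_smul, map_smul]
    exact hs
  · rw [harc, Matrix.add_mul, Matrix.add_mul, Matrix.smul_mul, Matrix.smul_mul]

theorem isArcTangent_transverseFrames_right [NeZero (2 : k)]
    {Ω g : Matrix (ι₁ ⊕ ι₂) (ι₁ ⊕ ι₂) k} (hΩ : Ωᵀ = -Ω)
    {S₁ : Set (Matrix n ι₁ k)} {S₂ : Set (Matrix n ι₂ k)}
    {B₁ : Matrix n ι₁ k} {B₂ : Matrix n ι₂ k} (hB₁ : B₁ ∈ S₁) (hB₂ : B₂ ∈ S₂)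
    (hg : g * Ω * gᵀ = Ω) (hinj : Function.Injective (tangentPairing Ω (fromCols B₁ B₂)))
    (w : ι₁ ⊕ ι₂ → k) :
    IsArcTangent k (transverseFrames Ω S₁ S₂) (fromCols B₁ B₂ * g)
      (fromCols B₁ B₂ * (Ω * vecMulVec w w) * g) := by
  classical
  refine ⟨0, .of_forall fun s =>
    ⟨B₁, hB₁, B₂, hB₂, (1 + s • (Ω * vecMulVec w w)) * g, ?_, hinj, ?_⟩⟩
  · calc (1 + s • (Ω * vecMulVec w w)) * g * Ω * ((1 + s • (Ω * vecMulVec w w)) * g)ᵀ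
      _ = (1 + s • (Ω * vecMulVec w w)) * (g * Ω * gᵀ) * (1 + s • (Ω * vecMulVec w w))ᵀ := by
        simp only [transpose_mul, Matrix.mul_assoc]
      _ = Ω := by rw [hg, one_add_smul_mul_mul_transpose_eq_self hΩ]
  · simp [Matrix.add_mul, Matrix.mul_add, Matrix.mul_assoc]

theorem mul_transpose_comm_of_forall_trace_mul_eq_zero [NeZero (2 : k)] (hsq : IsSquare (-1 : k))
    (hn : 3 ≤ Fintype.card n) {B L : Matrix n ι₁ k}
    (h : ∀ x : Matrix n n k, xᵀ = -x → x * x * x = 0 → (Lᵀ * (x * B)).trace = 0) :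
    B * Lᵀ = L * Bᵀ := by
  have hsymm : (B * Lᵀ).IsSymm := isSymm_of_forall_trace_mul_eq_zero hsq hn fun x hx hx3 => by
    rw [← Matrix.mul_assoc, trace_mul_comm, h x hx hx3]
  rw [← hsymm.eq, transpose_mul, transpose_transpose]

theorem tangentPairing_eq_zero_of_forall_trace_mul_eq_zero [NeZero (2 : k)]
    (hsq : IsSquare (-1 : k)) (hn : 3 ≤ Fintype.card n) {Ω : Matrix (ι₁ ⊕ ι₂) (ι₁ ⊕ ι₂) k}
    {B₁ : Matrix n ι₁ k} {B₂ : Matrix n ι₂ k} {L : Matrix n (ι₁ ⊕ ι₂) k}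
    (hleft : ∀ x₁ x₂ : Matrix n n k, x₁ᵀ = -x₁ → x₂ᵀ = -x₂ → x₁ * x₁ * x₁ = 0 →
      x₂ * x₂ * x₂ = 0 → (Lᵀ * fromCols (x₁ * B₁) (x₂ * B₂)).trace = 0)
    (hright : ∀ w, (Lᵀ * (fromCols B₁ B₂ * (Ω * vecMulVec w w))).trace = 0) :
    tangentPairing Ω (fromCols B₁ B₂) L = 0 := by
  rw [← fromCols_toCols L] at hleft hright ⊢
  have htrace : ∀ (X₁ : Matrix n ι₁ k) (X₂ : Matrix n ι₂ k),
      ((fromCols L.toCols₁ L.toCols₂)ᵀ * fromCols X₁ X₂).trace =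
        (L.toCols₁ᵀ * X₁).trace + (L.toCols₂ᵀ * X₂).trace := fun X₁ X₂ => by
    simp [transpose_fromCols, trace, -fromCols_toCols]
  refine tangentPairing_eq_zero_iff.2
    ⟨mul_transpose_comm_of_forall_trace_mul_eq_zero hsq hn fun x hx hx3 => ?_,
      mul_transpose_comm_of_forall_trace_mul_eq_zero hsq hn fun x hx hx3 => ?_,
      add_transpose_eq_zero_of_forall_dotProduct_mulVec fun w => ?_⟩
  · simpa using (htrace _ _).symm.trans (hleft x 0 hx (by simp) hx3 (by simp))
  · simpa using (htrace _ _).symm.trans (hleft 0 x (by simp) hx (by simp) hx3)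
  · have hw := hright w
    rwa [← Matrix.mul_assoc, ← Matrix.mul_assoc, mul_vecMulVec, trace_vecMulVec,
      dotProduct_comm] at hw

theorem eq_zero_of_forall_eval_fromCols_mul_eq_zero [DecidableEq n] [DecidableEq ι₁]
    [DecidableEq ι₂] [CharZero k] (hsq : IsSquare (-1 : k)) (hn : 3 ≤ Fintype.card n)
    {Ω : Matrix (ι₁ ⊕ ι₂) (ι₁ ⊕ ι₂) k} (hΩ : Ωᵀ = -Ω)
    (hu : IsUnit Ω.det) {S₁ : Set (Matrix n ι₁ k)} {S₂ : Set (Matrix n ι₂ k)}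
    (hS₁ : ∀ h : Matrix n n k, hᵀ * h = 1 → ∀ A ∈ S₁, h * A ∈ S₁)
    (hS₂ : ∀ h : Matrix n n k, hᵀ * h = 1 → ∀ A ∈ S₂, h * A ∈ S₂)
    {A₁ : Matrix n ι₁ k} {A₂ : Matrix n ι₂ k} (hA₁ : A₁ ∈ S₁) (hA₂ : A₂ ∈ S₂)
    (hA : Function.Injective (tangentPairing Ω (fromCols A₁ A₂)))
    {P : MvPolynomial (n × (ι₁ ⊕ ι₂)) k}
    (hP : ∀ B₁ ∈ S₁, ∀ B₂ ∈ S₂, ∀ g : Matrix (ι₁ ⊕ ι₂) (ι₁ ⊕ ι₂) k, g * Ω * gᵀ = Ω →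
      MvPolynomial.eval (fun q => (fromCols B₁ B₂ * g) q.1 q.2) P = 0) : P = 0 := by
  have : Infinite k := CharZero.infinite k
  refine eq_zero_of_forall_isArcTangent_matrix (T := transverseFrames Ω S₁ S₂)
    ⟨_, A₁, hA₁, A₂, hA₂, 1, by simp, hA, rfl⟩ ?_
    fun _ ⟨B₁, hB₁, B₂, hB₂, g, hg, _, h⟩ => h ▸ hP B₁ hB₁ B₂ hB₂ g hg
  rintro _ ⟨B₁, hB₁, B₂, hB₂, g, hg, hinj, rfl⟩ L hL
  have htrace : ∀ V : Matrix n (ι₁ ⊕ ι₂) k,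
      ((L * gᵀ)ᵀ * V).trace = (Lᵀ * (V * g)).trace := fun V => by
    rw [transpose_mul, transpose_transpose, Matrix.mul_assoc, trace_mul_comm, Matrix.mul_assoc]
  have hLg : L * gᵀ = 0 := by
    refine hinj ((tangentPairing_eq_zero_of_forall_trace_mul_eq_zero hsq hn ?_ ?_).trans
      (map_zero _).symm)
    · intro x₁ x₂ hx₁ hx₂ hx₁3 hx₂3
      rw [htrace, hL _ (isArcTangent_transverseFrames_left hS₁ hS₂ hB₁ hB₂ hg hinj hx₁ hx₂
        hx₁3 hx₂3)]
    · intro w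
      rw [htrace, hL _ (isArcTangent_transverseFrames_right hΩ hB₁ hB₂ hg hinj w)]
  have hgu : IsUnit gᵀ.det := by
    rw [← hg, det_mul] at hu
    exact isUnit_of_mul_isUnit_right hu
  rw [← mul_nonsing_inv_cancel_right gᵀ L hgu, hLg, Matrix.zero_mul]

end OrbitDensity

/-! ### Secant varieties of orbits of skew matrices -/

theorem exists_ne_zero_and_injective_sq (k : Type*) [Field k] [CharZero k] (l : Type*) [Finite l] :
    ∃ d : l → k, (∀ a, d a ≠ 0) ∧ Function.Injective fun a => d a ^ 2 := by
  obtain ⟨m, ⟨e⟩⟩ := Finite.exists_equiv_fin l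
  refine ⟨fun a => ((e a + 1 : ℕ) : k), fun a => Nat.cast_ne_zero.2 (Nat.succ_ne_zero _),
    fun a b hab => ?_⟩
  have hsq : (e a + 1 : ℕ) ^ 2 = (e b + 1 : ℕ) ^ 2 := by
    dsimp only at hab
    exact_mod_cast hab
  have hval := Nat.pow_left_injective two_ne_zero hsq
  exact e.injective (Fin.ext (Nat.succ_injective hval))

section Frames

variable {k n l : Type*} [Field k] [Fintype n] [DecidableEq n] [Fintype l] [DecidableEq l]

theorem HasJordanType.mul_mul_transpose {s : Multiset ℕ} {A : Matrix n l k} {A' : Matrix l n k}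
    {Ω : Matrix l l k} (hs : s.sum = Fintype.card n) (hA : A' * A = 1) (hΩ : IsUnit Ω.det)
    (h : HasJordanType (Ω * (Aᵀ * A)) (s.map (· - 1))) : HasJordanType (A * Ω * Aᵀ) s
  | 0 => by simp [hs]
  | i + 1 => by
    rw [rank_mul_mul_transpose_pow_succ hA hΩ, h i, Multiset.map_map]
    simp only [Function.comp_def, Nat.sub_sub, Nat.add_comm 1]

theorem exists_hasJordanType_and_injective_tangentPairing [IsAlgClosed k] [CharZero k]
    {s : Multiset ℕ} (hn : s.sum = Fintype.card n)
    (hs : ∀ d, Odd d → Even ((s.map (· - 1)).count d))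
    (hl : (s.map (· - 1)).sum = 2 * Fintype.card l) (h2 : (s.map (· - 2)).sum ≠ 0)
    (hln : 4 * Fintype.card l ≤ Fintype.card n) :
    ∃ A₁ A₂ : Matrix n (l ⊕ l) k, HasJordanType (A₁ * J l k * A₁ᵀ) s ∧
      HasJordanType (A₂ * J l k * A₂ᵀ) s ∧
      Function.Injective (tangentPairing (fromBlocks (J l k) 0 0 (J l k)) (fromCols A₁ A₂)) := by
  obtain ⟨G₁, G₂, hG₁, hG₂, hX₁, hX₂, hG⟩ := exists_inGeneralPosition (k := k) hs hl
    (by simpa only [Multiset.map_map, Function.comp_def, Nat.sub_sub] using h2)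
  obtain ⟨d, hd0, hd⟩ := exists_ne_zero_and_injective_sq k l
  have hB : IsUnit (J l k * planeDiagonal d).det := by
    rw [det_mul]
    exact (isUnit_det_J l k).mul (isUnit_det_planeDiagonal hd0)
  obtain ⟨c, hc, hu⟩ := exists_isUnit_det_fromBlocks_smul hB G₁ G₂
  obtain ⟨A, hA⟩ := exists_transpose_mul_self_eq (r := n)
    (by simp only [Fintype.card_sum]; lia)
    (IsSymm.fromBlocks hG₁ rfl hG₂)
  have hleft : (Aᵀ * A)⁻¹ * Aᵀ * A = 1 := by
    rw [Matrix.mul_assoc, nonsing_inv_mul _ (hA ▸ hu)]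
  set A' := (Aᵀ * A)⁻¹ * Aᵀ
  rw [← fromCols_toCols A, ← fromRows_toRows A', fromRows_mul_fromCols, ← fromBlocks_one,
    fromBlocks_inj] at hleft
  rw [← fromCols_toCols A, transpose_fromCols, fromRows_mul_fromCols, fromBlocks_inj,
    ← Matrix.mul_smul, smul_planeDiagonal] at hA
  obtain ⟨hA₁, -, -, hA₂⟩ := hleft
  obtain ⟨rfl, hA₁₂, -, rfl⟩ := hA
  refine ⟨A.toCols₁, A.toCols₂, hX₁.mul_mul_transpose hn hA₁ (isUnit_det_J l k),
    hX₂.mul_mul_transpose hn hA₂ (isUnit_det_J l k),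
    hG.injective_tangentPairing (d := c • d) (fun a => mul_ne_zero hc (hd0 a))
      (fun a b hab => hd ?_)
      hA₁ hA₂ hA₁₂⟩
  simpa [mul_pow, hc] using hab

end Frames

section Secant

variable {k n : Type*} [Field k]

theorem rank_add_le_rank_add_rank [Fintype n] (x y : Matrix n n k) :
    (x + y).rank ≤ x.rank + y.rank := by
  rw [rank, mulVecLin_add]
  exact (Submodule.finrank_mono (LinearMap.range_add_le _ _)).trans
    (Submodule.finrank_add_le_finrank_add_finrank _ _)

theorem exists_mul_mul_eq_one [Fintype n] (M : Matrix n n k) :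
    ∃ (R : Matrix (Fin M.rank) n k) (C : Matrix n (Fin M.rank) k), R * M * C = 1 := by
  classical
  obtain ⟨V, U, e, -, -, h⟩ := M.exists_rank_normal_form
  refine ⟨V.submatrix (e.symm ∘ Sum.inl) id, U.submatrix id (e.symm ∘ Sum.inl), ?_⟩
  calc V.submatrix (e.symm ∘ Sum.inl) id * M * U.submatrix id (e.symm ∘ Sum.inl)
      = (V * M * U).submatrix (e.symm ∘ Sum.inl) (e.symm ∘ Sum.inl) := rfl
    _ = 1 := by
      rw [h]
      ext i j
      simp [submatrix]

theorem transpose_eq_neg_of_mem_zClosure {R : Type*} [CommRing R] {N : ℕ}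
    {S : Set (Matrix (Fin N) (Fin N) R)} (hS : ∀ x ∈ S, xᵀ = -x) {M : Matrix (Fin N) (Fin N) R}
    (hM : M ∈ zClosure S) : Mᵀ = -M := by
  ext i j
  have hij := hM (MvPolynomial.X (j, i) + MvPolynomial.X (i, j)) fun x hx => by
    simpa [eq_neg_iff_add_eq_zero] using congrFun (congrFun (hS x hx) i) j
  simpa [eq_neg_iff_add_eq_zero] using hij

theorem rank_le_of_mem_zClosure {N r : ℕ} {S : Set (Matrix (Fin N) (Fin N) k)}
    (hS : ∀ x ∈ S, x.rank ≤ r) {M : Matrix (Fin N) (Fin N) k} (hM : M ∈ zClosure S) :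
    M.rank ≤ r := by
  by_contra! hr
  obtain ⟨R, C, hRC⟩ := exists_mul_mul_eq_one M
  let P : MvPolynomial (Fin N × Fin N) k :=
    (R.map (MvPolynomial.C (σ := Fin N × Fin N)) * mvPolynomialX (Fin N) (Fin N) k *
      C.map (MvPolynomial.C (σ := Fin N × Fin N))).det
  have hP : ∀ x : Matrix (Fin N) (Fin N) k,
      MvPolynomial.eval (fun q => x q.1 q.2) P = (R * x * C).det := fun x => by
    rw [RingHom.map_det]
    congr 1
    ext i j
    simp [mul_apply, mvPolynomialX]
  have hzero := hM P fun x hx => by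
    rw [hP]
    by_contra hdet
    have hrank := rank_of_isUnit _ ((isUnit_iff_isUnit_det _).2 (isUnit_iff_ne_zero.2 hdet))
    rw [Fintype.card_fin] at hrank
    exact (((rank_mul_mul_le R x C).trans (hS x hx)).trans_lt hr).ne hrank
  rw [hP, hRC, det_one] at hzero
  exact one_ne_zero hzero

theorem exists_eval_eq_eval_mul_mul_transpose {R c : Type*} [CommSemiring R] [Fintype c]
    (Ω : Matrix c c R) (P : MvPolynomial (n × n) R) :
    ∃ Q : MvPolynomial (n × c) R, ∀ A : Matrix n c R,
      MvPolynomial.eval (fun q => A q.1 q.2) Q =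
        MvPolynomial.eval (fun q => (A * Ω * Aᵀ) q.1 q.2) P := by
  refine ⟨MvPolynomial.bind₁ (fun q => (mvPolynomialX n c R *
    Ω.map (MvPolynomial.C (σ := n × c)) * (mvPolynomialX n c R)ᵀ) q.1 q.2) P, fun A => ?_⟩
  rw [← MvPolynomial.aeval_eq_eval, MvPolynomial.aeval_bind₁, ← MvPolynomial.aeval_eq_eval]
  congr 2
  funext q
  simp [mul_apply, mvPolynomialX]

theorem fromCols_mul_mul_mul_transpose {R ι₁ ι₂ : Type*} [CommSemiring R] [Fintype ι₁] [Fintype ι₂]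
    {Ω₁ : Matrix ι₁ ι₁ R} {Ω₂ : Matrix ι₂ ι₂ R} {g : Matrix (ι₁ ⊕ ι₂) (ι₁ ⊕ ι₂) R}
    (hg : g * fromBlocks Ω₁ 0 0 Ω₂ * gᵀ = fromBlocks Ω₁ 0 0 Ω₂) (B₁ : Matrix n ι₁ R)
    (B₂ : Matrix n ι₂ R) :
    fromCols B₁ B₂ * g * fromBlocks Ω₁ 0 0 Ω₂ * (fromCols B₁ B₂ * g)ᵀ =
      B₁ * Ω₁ * B₁ᵀ + B₂ * Ω₂ * B₂ᵀ := by
  calc fromCols B₁ B₂ * g * fromBlocks Ω₁ 0 0 Ω₂ * (fromCols B₁ B₂ * g)ᵀ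
      = fromCols B₁ B₂ * (g * fromBlocks Ω₁ 0 0 Ω₂ * gᵀ) * (fromCols B₁ B₂)ᵀ := by
        simp only [transpose_mul, Matrix.mul_assoc]
    _ = B₁ * Ω₁ * B₁ᵀ + B₂ * Ω₂ * B₂ᵀ := by
        simp [hg, fromCols_mul_fromBlocks, transpose_fromCols, fromCols_mul_fromRows]

theorem mem_zClosure_image2_add_of_rank_le [CharZero k] (hsq : IsSquare (-1 : k)) {l : Type*}
    [Fintype l] [DecidableEq l] {N : ℕ} (hN : 3 ≤ N) {O : Set (Matrix (Fin N) (Fin N) k)}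
    (hO : ∀ h : Matrix (Fin N) (Fin N) k, hᵀ * h = 1 → ∀ x ∈ O, h * x * hᵀ ∈ O)
    {A₁ A₂ : Matrix (Fin N) (l ⊕ l) k} (hA₁ : A₁ * J l k * A₁ᵀ ∈ O) (hA₂ : A₂ * J l k * A₂ᵀ ∈ O)
    (hA : Function.Injective (tangentPairing (fromBlocks (J l k) 0 0 (J l k)) (fromCols A₁ A₂)))
    {M : Matrix (Fin N) (Fin N) k} (hM : Mᵀ = -M) (hr : M.rank ≤ 4 * Fintype.card l) :
    M ∈ zClosure (Set.image2 (· + ·) O O) := by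
  intro P hP
  have hΩ : (fromBlocks (J l k) 0 0 (J l k))ᵀ = -fromBlocks (J l k) 0 0 (J l k) := by
    simp [fromBlocks_transpose, fromBlocks_neg, J_transpose]
  have hu : IsUnit (fromBlocks (J l k) 0 0 (J l k)).det := by
    rw [det_fromBlocks_zero₂₁]
    exact (isUnit_det_J l k).mul (isUnit_det_J l k)
  have hcard : Fintype.card ((l ⊕ l) ⊕ l ⊕ l) = 2 * Fintype.card l + 2 * Fintype.card l := by
    simp only [Fintype.card_sum, two_mul]
  let S : Set (Matrix (Fin N) (l ⊕ l) k) := {A | A * J l k * Aᵀ ∈ O}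
  have hS : ∀ h : Matrix (Fin N) (Fin N) k, hᵀ * h = 1 → ∀ A ∈ S, h * A ∈ S := fun h hh A hA => by
    have hconj := hO h hh _ hA
    simp only [Matrix.mul_assoc] at hconj
    simpa only [S, Set.mem_ofPred_eq, transpose_mul, Matrix.mul_assoc] using hconj
  obtain ⟨Q, hQ⟩ := exists_eval_eq_eval_mul_mul_transpose (fromBlocks (J l k) 0 0 (J l k)) P
  have hQ0 : Q = 0 := by
    refine eq_zero_of_forall_eval_fromCols_mul_eq_zero hsq (by simpa using hN) hΩ hu
      hS hS hA₁ hA₂ hA fun B₁ hB₁ B₂ hB₂ g hg => ?_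
    rw [hQ, fromCols_mul_mul_mul_transpose hg]
    exact hP _ ⟨_, hB₁, _, hB₂, rfl⟩
  obtain ⟨A, rfl⟩ := exists_eq_mul_mul_transpose hΩ hu ⟨_, hcard⟩ hM (by lia)
  rw [← hQ, hQ0, map_zero]

theorem zClosure_image2_add_hasJordanType [IsAlgClosed k] [CharZero k] {N m : ℕ} {s : Multiset ℕ}
    (hN : s.sum = N) (hs : ∀ d, Odd d → Even ((s.map (· - 1)).count d))
    (hm : (s.map (· - 1)).sum = 2 * m) (h2 : (s.map (· - 2)).sum ≠ 0) (hmN : 4 * m ≤ N)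
    {O : Set (Matrix (Fin N) (Fin N) k)} (hO : ∀ x, x ∈ O ↔ HasJordanType x s ∧ xᵀ = -x) :
    zClosure (Set.image2 (· + ·) O O) = {M | Mᵀ = -M ∧ M.rank ≤ 4 * m} := by
  have hm0 : (s.map (· - 2)).sum ≤ 2 * m :=
    hm ▸ Multiset.sum_map_le_sum_map _ _ fun d _ => Nat.sub_le_sub_left one_le_two d
  have hconj : ∀ h : Matrix (Fin N) (Fin N) k, hᵀ * h = 1 → ∀ x ∈ O, h * x * hᵀ ∈ O := by
    intro h hh x hx
    obtain ⟨hX, hskew⟩ := (hO x).1 hx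
    exact (hO _).2 ⟨hX.conj hh (mul_eq_one_comm.1 hh), by simp [hskew, Matrix.mul_assoc]⟩
  have hmem : ∀ A : Matrix (Fin N) (Fin m ⊕ Fin m) k, HasJordanType (A * J (Fin m) k * Aᵀ) s →
      A * J (Fin m) k * Aᵀ ∈ O := fun A hX =>
    (hO _).2 ⟨hX, by simp [J_transpose, Matrix.mul_assoc]⟩
  refine Set.Subset.antisymm (fun M hM => ⟨?_, ?_⟩) fun M ⟨hM, hr⟩ => ?_
  · refine transpose_eq_neg_of_mem_zClosure ?_ hM
    rintro _ ⟨x, hx, y, hy, rfl⟩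
    rw [transpose_add, ((hO x).1 hx).2, ((hO y).1 hy).2, neg_add]
  · refine rank_le_of_mem_zClosure ?_ hM
    rintro _ ⟨x, hx, y, hy, rfl⟩
    have hrank : ∀ z ∈ O, z.rank = 2 * m := fun z hz => by
      rw [← hm, ← ((hO z).1 hz).1 1, pow_one]
    refine (rank_add_le_rank_add_rank x y).trans ?_
    rw [hrank x hx, hrank y hy]
    lia
  · obtain ⟨A₁, A₂, hX₁, hX₂, hA⟩ := exists_hasJordanType_and_injective_tangentPairing (k := k)
      (n := Fin N) (l := Fin m) (by simpa using hN) hs (by simpa using hm) h2 (by simpa using hmN)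
    exact mem_zClosure_image2_add_of_rank_le (IsAlgClosed.exists_eq_mul_self _) (by lia) hconj
      (hmem A₁ hX₁) (hmem A₂ hX₂) hA hM (by simpa using hr)

end Secant

section Partition

variable {p : ℕ} {lam : Fin p → ℕ}

theorem mem_jordanOrbit_iff {k : Type*} [Field k] {N : ℕ} (hsum : ∑ l, lam l = N)
    {M : Matrix (Fin N) (Fin N) k} :
    M ∈ jordanOrbit k N lam ↔ HasJordanType M (Finset.univ.val.map lam) := by
  have hmap : ∀ i, ((Finset.univ.val.map lam).map (· - i)).sum = ∑ l, (lam l - i) := fun i => by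
    rw [Multiset.map_map]
    rfl
  refine ⟨fun h i => ?_, fun h i _ => (h i).trans (hmap i)⟩
  rcases Nat.eq_zero_or_pos i with rfl | hi
  · rw [pow_zero, rank_one, hmap, Fintype.card_fin, ← hsum]
    rfl
  · rw [hmap, h i hi]

theorem IsOrthogonalParts.even_count_map_sub_one (h : IsOrthogonalParts lam)
    (hpos : ∀ l, 1 ≤ lam l) {d : ℕ} (hd : Odd d) :
    Even (((Finset.univ.val.map lam).map (· - 1)).count d) := by
  have hcount : ((Finset.univ.val.map lam).map (· - 1)).count d =
      (Finset.univ.filter fun l => lam l = d + 1).card := by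
    rw [Multiset.map_map, Multiset.count_map, ← Finset.filter_val, Finset.card_val]
    congr 1
    ext l
    have := hpos l
    simp only [Function.comp_apply, Finset.mem_filter, Finset.mem_univ, true_and]
    lia
  exact hcount ▸ h (d + 1) d.succ_pos hd.add_one

end Partition

theorem stmt6_general {k : Type*} [Field k] [IsAlgClosed k] [CharZero k] {N p m : ℕ}
    (lam : Fin p → ℕ) (hpos : ∀ l, 1 ≤ lam l) (hsum : ∑ l, lam l = N)
    (horth : IsOrthogonalParts lam) (h3 : ∃ l, 3 ≤ lam l) (hm : N - p = 2 * m)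
    (hmN : 4 * m ≤ N) :
    zClosure (Set.image2 (· + ·) (jordanOrbit k N lam ∩ soSet k N)
        (jordanOrbit k N lam ∩ soSet k N))
      = {M : Matrix (Fin N) (Fin N) k | Mᵀ = -M ∧ M.rank ≤ 4 * m} := by
  obtain ⟨l, hl⟩ := h3
  refine zClosure_image2_add_hasJordanType (s := Finset.univ.val.map lam) hsum
    (fun d => horth.even_count_map_sub_one hpos) ?_ ?_ hmN
    fun x => and_congr_left' (mem_jordanOrbit_iff hsum)
  · rw [Multiset.map_map, ← hm, ← hsum]
    exact (Finset.sum_tsub_distrib Finset.univ fun l _ => hpos l).trans (by simp)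
  · rw [Multiset.map_map]
    exact (Finset.sum_pos' (fun _ _ => Nat.zero_le _)
      ⟨l, Finset.mem_univ l, Nat.sub_pos_of_lt hl⟩).ne'

/-- For an orthogonal partition `λ` of `N ≥ 7` with `λ₁ ≥ 3` and `2m := N − p < ⌊N/2⌋`,
the conical secant variety of the nilpotent `SO_N`-orbit `O_λ ∩ so_N` is the
skew-symmetric determinantal variety of rank at most `4m`. -/
theorem stmt6 {k : Type*} [Field k] [IsAlgClosed k] [CharZero k]
    {N p m : ℕ} (hN : 7 ≤ N) (hp : 0 < p) (lam : Fin p → ℕ)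
    (hanti : Antitone lam) (hpos : ∀ l, 1 ≤ lam l)
    (hsum : ∑ l, lam l = N)
    (horth : IsOrthogonalParts lam)
    (hl1 : 3 ≤ lam ⟨0, hp⟩)
    (hm : N - p = 2 * m) (hsmall : 2 * m < N / 2) :
    zClosure (Set.image2 (· + ·) (jordanOrbit k N lam ∩ soSet k N)
        (jordanOrbit k N lam ∩ soSet k N))
      = {M : Matrix (Fin N) (Fin N) k | Mᵀ = -M ∧ M.rank ≤ 4 * m} :=
  stmt6_general lam hpos hsum horth ⟨_, hl1⟩ hm (by lia)
end
end

section
/- Let N ≥ 5 and 2 ≤ j ≤ ⌊(N−1)/2⌋. The map λ ↦ λ' (erasing the first column of the Young diagram) is a bijection from the set A_j = {partitions λ of N with λ₁ ≥ 3 and N − p(λ) = j} onto the set of partitions ν of j with ν₁ ≥ 2, and for all λ, μ ∈ A_j one has λ ⊴ μ in the dominance order if and only if λ' ⊴ μ'. (Hence the subposet Υ_j of nilpotent SL_N-orbits is isomorphic, as a poset under closure order, to the poset of nonzero nilpotent orbits of sl_j.) -/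
noncomputable section

/-- A partition of `n`, represented as an antitone function `ℕ → ℕ` (the parts in weakly
decreasing order, padded by zeros), vanishing from index `n` on and summing to `n`. -/
def IsPartitionOf (n : ℕ) (f : ℕ → ℕ) : Prop :=
  Antitone f ∧ f n = 0 ∧ ∑ i ∈ Finset.range n, f i = n

/-- The number of (nonzero) parts of a partition of `n`. -/
def numParts (n : ℕ) (f : ℕ → ℕ) : ℕ :=
  ((Finset.range n).filter (fun i => f i ≠ 0)).card

/-- The dominance order on partitions: `f ⊴ g` iff all partial sums of `f` are at most
the corresponding partial sums of `g`. -/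
def Dominates (f g : ℕ → ℕ) : Prop :=
  ∀ m : ℕ, ∑ i ∈ Finset.range m, f i ≤ ∑ i ∈ Finset.range m, g i

/-- Erasing the first column of the Young diagram: each part decreases by `1`
(zero parts are automatically discarded in this representation). -/
def eraseCol (f : ℕ → ℕ) : ℕ → ℕ := fun i => f i - 1

/-!
Deleting the first column is undone by restoring a column whose length is the number of parts, and
on `A_j` that length is the constant `p = N - j`. So erasure identifies the partitions of `j + p`
with exactly `p` parts with the partitions of `j` with at most `p` parts, and it lowers the `m`-th
partial sum by `min m p`, the same amount for every partition, which makes dominance insensitive to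
it. The first row and the first column of a diagram overlap in one box, so a partition of `j` with
`ν₁ ≥ 2` has at most `j - 1` parts; the bound on the number of parts is thus automatic as soon as
`j - 1 ≤ N - j`.
-/

/-- Adding a first column of length `p` to a Young diagram, the inverse of `eraseCol`. The result
is the diagram of a partition with exactly `p` parts only if `g` has at most `p` parts; otherwise
the new boxes still go to the first `p` rows. -/
def addCol (p : ℕ) (g : ℕ → ℕ) : ℕ → ℕ := fun i => g i + if i < p then 1 else 0

theorem numParts_le (n : ℕ) (f : ℕ → ℕ) : numParts n f ≤ n :=
  (Finset.card_filter_le _ _).trans (Finset.card_range n).le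

section Antitone

variable {n p : ℕ} {f : ℕ → ℕ}

theorem antitone_eraseCol (hf : Antitone f) : Antitone (eraseCol f) :=
  fun _ _ hab => Nat.sub_le_sub_right (hf hab) 1

theorem antitone_addCol (hf : Antitone f) : Antitone (addCol p f) := by
  intro a b hab
  have := hf hab
  unfold addCol
  split_ifs <;> omega

theorem eq_zero_of_antitone_of_le (hf : Antitone f) (hn : f n = 0) {i : ℕ} (hi : n ≤ i) : f i = 0 :=
  Nat.eq_zero_of_le_zero (hn ▸ hf hi)

theorem sum_range_eq_of_antitone_of_le (hf : Antitone f) (hn : f n = 0) {m : ℕ} (hm : n ≤ m) :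
    ∑ i ∈ Finset.range m, f i = ∑ i ∈ Finset.range n, f i :=
  Finset.eventually_constant_sum (fun _ hi => eq_zero_of_antitone_of_le hf hn hi) hm

theorem lt_numParts_iff (hf : Antitone f) (hn : f n = 0) {i : ℕ} :
    i < numParts n f ↔ f i ≠ 0 := by
  have hzero : ∃ k, f k = 0 := ⟨n, hn⟩
  have hlt (i : ℕ) : i < Nat.find hzero ↔ f i ≠ 0 := by
    rw [Nat.lt_find_iff]
    exact ⟨fun h => h i le_rfl, fun hi k hk h0 => hi (eq_zero_of_antitone_of_le hf h0 hk)⟩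
  have hfilter : (Finset.range n).filter (fun i => f i ≠ 0) = Finset.range (Nat.find hzero) := by
    have hle : Nat.find hzero ≤ n := Nat.find_min' hzero hn
    ext i
    simp only [Finset.mem_filter, Finset.mem_range, ← hlt]
    omega
  rw [numParts, hfilter, Finset.card_range, hlt]

theorem numParts_le_iff (hf : Antitone f) (hn : f n = 0) : numParts n f ≤ p ↔ f p = 0 := by
  rw [← not_lt, lt_numParts_iff hf hn, not_not]

theorem addCol_numParts_eraseCol (hf : Antitone f) (hn : f n = 0) :
    addCol (numParts n f) (eraseCol f) = f := by
  funext i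
  have := lt_numParts_iff hf hn (i := i)
  unfold addCol eraseCol
  split_ifs <;> omega

theorem eraseCol_addCol (hf : Antitone f) (hp : f p = 0) : eraseCol (addCol p f) = f := by
  funext i
  have := eq_zero_of_antitone_of_le hf hp (i := i)
  unfold eraseCol addCol
  split_ifs <;> omega

theorem numParts_addCol (hf : Antitone f) (hp : f p = 0) (hpn : p ≤ n) :
    numParts n (addCol p f) = p := by
  have hsupport (i : ℕ) : addCol p f i ≠ 0 ↔ i < p := by
    have := eq_zero_of_antitone_of_le hf hp (i := i)
    unfold addCol
    split_ifs <;> omega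
  have hn : addCol p f n = 0 := not_not.1 (mt (hsupport n).1 hpn.not_gt)
  exact eq_of_forall_lt_iff fun i => (lt_numParts_iff (antitone_addCol hf) hn).trans (hsupport i)

end Antitone

theorem sum_range_addCol (m p : ℕ) (g : ℕ → ℕ) :
    ∑ i ∈ Finset.range m, addCol p g i = ∑ i ∈ Finset.range m, g i + min m p := by
  have hcol : (Finset.range m).filter (· < p) = Finset.range (min m p) := by
    ext i
    simp only [Finset.mem_filter, Finset.mem_range, lt_min_iff]
  simp only [addCol, Finset.sum_add_distrib, ← Finset.card_filter, hcol, Finset.card_range]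

theorem dominates_addCol_iff {p : ℕ} {f g : ℕ → ℕ} :
    Dominates (addCol p f) (addCol p g) ↔ Dominates f g := by
  simp only [Dominates, sum_range_addCol, add_le_add_iff_right]

theorem dominates_eraseCol_iff {m n : ℕ} {f g : ℕ → ℕ} (hf : Antitone f) (hm : f m = 0)
    (hg : Antitone g) (hn : g n = 0) (hparts : numParts m f = numParts n g) :
    Dominates (eraseCol f) (eraseCol g) ↔ Dominates f g := by
  rw [← dominates_addCol_iff (p := numParts m f), addCol_numParts_eraseCol hf hm, hparts,
    addCol_numParts_eraseCol hg hn]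

theorem isPartitionOf_of_sum_range_eq {n j : ℕ} {f : ℕ → ℕ} (hf : Antitone f) (hn : f n = 0)
    (hsum : ∑ i ∈ Finset.range n, f i = j) : IsPartitionOf j f := by
  have hj : f j = 0 := by
    by_contra hpos
    have hjn : j + 1 ≤ n := not_le.1 fun h => hpos (eq_zero_of_antitone_of_le hf hn h)
    have : j + 1 ≤ j := calc
      j + 1 = (Finset.range (j + 1)).card • 1 := by simp
      _ ≤ ∑ i ∈ Finset.range (j + 1), f i := Finset.card_nsmul_le_sum _ _ _ fun i hi =>
        (Nat.one_le_iff_ne_zero.2 hpos).trans (hf (Finset.mem_range_succ_iff.1 hi))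
      _ ≤ ∑ i ∈ Finset.range n, f i :=
        Finset.sum_le_sum_of_subset (Finset.range_subset_range.2 hjn)
      _ = j := hsum
    omega
  refine ⟨hf, hj, ?_⟩
  rw [← sum_range_eq_of_antitone_of_le hf hj (le_max_left j n),
    sum_range_eq_of_antitone_of_le hf hn (le_max_right j n), hsum]

theorem IsPartitionOf.sum_range_eq {m n : ℕ} {f : ℕ → ℕ} (hf : IsPartitionOf n f) (hm : n ≤ m) :
    ∑ i ∈ Finset.range m, f i = n :=
  (sum_range_eq_of_antitone_of_le hf.1 hf.2.1 hm).trans hf.2.2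

theorem IsPartitionOf.apply_le {n : ℕ} {f : ℕ → ℕ} (hf : IsPartitionOf n f) (i : ℕ) :
    f i ≤ n := calc
  f i ≤ ∑ k ∈ Finset.range (n + i + 1), f k :=
    Finset.single_le_sum (fun _ _ => Nat.zero_le _) (Finset.mem_range.2 (by omega))
  _ = n := hf.sum_range_eq (by omega)

theorem isPartitionOf_addCol {n : ℕ} {f : ℕ → ℕ} (hf : IsPartitionOf n f) (p : ℕ) :
    IsPartitionOf (n + p) (addCol p f) := by
  refine ⟨antitone_addCol hf.1, ?_, ?_⟩
  · simp [addCol, eq_zero_of_antitone_of_le hf.1 hf.2.1 (Nat.le_add_right n p)]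
  · rw [sum_range_addCol, hf.sum_range_eq (Nat.le_add_right n p),
      min_eq_right (Nat.le_add_left p n)]

theorem isPartitionOf_eraseCol {n : ℕ} {f : ℕ → ℕ} (hf : IsPartitionOf n f) :
    IsPartitionOf (n - numParts n f) (eraseCol f) := by
  have hsum : n = ∑ i ∈ Finset.range n, eraseCol f i + numParts n f := by
    have h := sum_range_addCol n (numParts n f) (eraseCol f)
    rwa [addCol_numParts_eraseCol hf.1 hf.2.1, hf.2.2, min_eq_right (numParts_le n f)] at h
  have hn : eraseCol f n = 0 := by simp only [eraseCol, hf.2.1]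
  exact isPartitionOf_of_sum_range_eq (antitone_eraseCol hf.1) hn (Nat.eq_sub_of_add_eq hsum.symm)

theorem IsPartitionOf.apply_zero_add_numParts_le {n : ℕ} {f : ℕ → ℕ} (hf : IsPartitionOf n f) :
    f 0 + numParts n f ≤ n + 1 := by
  have hrow : f 0 - 1 ≤ n - numParts n f := (isPartitionOf_eraseCol hf).apply_le 0
  have := numParts_le n f
  omega

theorem bijOn_eraseCol (j p : ℕ) :
    Set.BijOn eraseCol
      {f | IsPartitionOf (j + p) f ∧ numParts (j + p) f = p}
      {g | IsPartitionOf j g ∧ numParts j g ≤ p} := by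
  refine Set.InvOn.bijOn (f' := addCol p) ⟨?leftInv, ?rightInv⟩ ?erase ?add
  case leftInv =>
    rintro f ⟨hf, hp⟩
    simpa only [hp] using addCol_numParts_eraseCol hf.1 hf.2.1
  case rightInv =>
    rintro g ⟨hg, hp⟩
    exact eraseCol_addCol hg.1 ((numParts_le_iff hg.1 hg.2.1).1 hp)
  case erase =>
    rintro f ⟨hf, hp⟩
    have hg : IsPartitionOf j (eraseCol f) := by
      simpa only [hp, Nat.add_sub_cancel] using isPartitionOf_eraseCol hf
    have hfp : f p = 0 := (numParts_le_iff hf.1 hf.2.1).1 hp.le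
    exact ⟨hg, (numParts_le_iff hg.1 hg.2.1).2 (by simp only [eraseCol, hfp])⟩
  case add =>
    rintro g ⟨hg, hp⟩
    exact ⟨isPartitionOf_addCol hg p,
      numParts_addCol hg.1 ((numParts_le_iff hg.1 hg.2.1).1 hp) (Nat.le_add_left p j)⟩

theorem stmt7_general (N j : ℕ) (hj : 2 * j ≤ N + 1) :
    Set.BijOn eraseCol
      {f | IsPartitionOf N f ∧ 3 ≤ f 0 ∧ N - numParts N f = j}
      {g | IsPartitionOf j g ∧ 2 ≤ g 0} ∧
    ∀ f ∈ {f : ℕ → ℕ | IsPartitionOf N f ∧ 3 ≤ f 0 ∧ N - numParts N f = j},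
      ∀ g ∈ {f : ℕ → ℕ | IsPartitionOf N f ∧ 3 ≤ f 0 ∧ N - numParts N f = j},
        (Dominates f g ↔ Dominates (eraseCol f) (eraseCol g)) := by
  obtain ⟨p, rfl⟩ : ∃ p, N = j + p := Nat.exists_eq_add_of_le (by omega)
  have hparts (f : ℕ → ℕ) : j + p - numParts (j + p) f = j ↔ numParts (j + p) f = p := by
    have := numParts_le (j + p) f
    omega
  simp only [hparts]
  refine ⟨?_, fun f ⟨hf, _, hfp⟩ g ⟨hg, _, hgp⟩ =>
    (dominates_eraseCol_iff hf.1 hf.2.1 hg.1 hg.2.1 (hfp.trans hgp.symm)).symm⟩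
  have hshort : {g | IsPartitionOf j g ∧ 2 ≤ g 0} ⊆ {g | IsPartitionOf j g ∧ numParts j g ≤ p} := by
    rintro g ⟨hg, hg0⟩
    have := hg.apply_zero_add_numParts_le
    exact ⟨hg, by omega⟩
  convert (bijOn_eraseCol j p).subset_right hshort using 1
  ext f
  have hrow : 3 ≤ f 0 ↔ 2 ≤ eraseCol f 0 := by
    unfold eraseCol
    omega
  constructor
  · rintro ⟨hf, hf0, hp⟩
    exact ⟨⟨hf, hp⟩, ((bijOn_eraseCol j p).mapsTo ⟨hf, hp⟩).1, hrow.1 hf0⟩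
  · rintro ⟨⟨hf, hp⟩, -, hf0⟩
    exact ⟨hf, hrow.2 hf0, hp⟩

/-- For `N ≥ 5` and `2 ≤ j ≤ ⌊(N−1)/2⌋`, erasing the first column is a bijection from
`A_j = {λ ⊢ N : λ₁ ≥ 3, N − p(λ) = j}` onto `{ν ⊢ j : ν₁ ≥ 2}`, and it preserves and
reflects the dominance order on `A_j`. -/
theorem stmt7 (N j : ℕ) (hN : 5 ≤ N) (hj2 : 2 ≤ j) (hj : j ≤ (N - 1) / 2) :
    Set.BijOn eraseCol
      {f | IsPartitionOf N f ∧ 3 ≤ f 0 ∧ N - numParts N f = j}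
      {g | IsPartitionOf j g ∧ 2 ≤ g 0} ∧
    ∀ f ∈ {f : ℕ → ℕ | IsPartitionOf N f ∧ 3 ≤ f 0 ∧ N - numParts N f = j},
      ∀ g ∈ {f : ℕ → ℕ | IsPartitionOf N f ∧ 3 ≤ f 0 ∧ N - numParts N f = j},
        (Dominates f g ↔ Dominates (eraseCol f) (eraseCol g)) :=
  stmt7_general N j (by omega)
end
end

section
/- Let N ≥ 4 and let P be the set of partitions λ of N satisfying λ₁ ≤ 2 or 2(N − p(λ)) < N. Then the maximal elements of P with respect to the dominance order are exactly: (2,2) if N = 4; the two partitions (2^n) and (n, 1^n) if N = 2n ≥ 6; and the single partition (n+1, 1^n) if N = 2n+1 ≥ 5. (These are precisely the partitions of the maximal nilpotent SL_N-orbits O whose conical secant variety CS(O) is not all of sl_N, i.e., whose secant variety is defective.) -/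
noncomputable section

/-- The maximal elements of a set of partitions with respect to the dominance order. -/
def maximalsIn (P : Set (ℕ → ℕ)) : Set (ℕ → ℕ) :=
  {f | f ∈ P ∧ ∀ g ∈ P, Dominates f g → f = g}

/-- The partition `(2^r)`. -/
def twoPow (r : ℕ) : ℕ → ℕ := fun i => if i < r then 2 else 0

/-- The hook partition `(a, 1^b)`. -/
def hookPart (a b : ℕ) : ℕ → ℕ := fun i => if i = 0 then a else if i ≤ b then 1 else 0

/-- The partitions of `N` with `λ₁ ≤ 2` or `2(N − p(λ)) < N` (the nilpotent
`SL_N`-orbits with defective secant variety). -/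
def defectiveSL (N : ℕ) : Set (ℕ → ℕ) :=
  {f | IsPartitionOf N f ∧ (f 0 ≤ 2 ∨ 2 * (N - numParts N f) < N)}

/-!
Note the direction: `Dominates f g` is `f ⊴ g`. For `N ≥ 1` the inequality `2 * (N - p(f)) < N` says
that `f` has more than `N / 2` parts, i.e. that `f (N / 2) ≠ 0`. Both defectiveness conditions
describe principal ideals of the dominance order: a partition of `2 * r` has largest part at most
`2` iff it lies below `(2^r)`, and a partition of `a + b` with `a ≥ 1` has more than `b` parts iff
it lies below `(a, 1^b)`. Hence the maximal elements for `N = 2 * n` are to be found among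
`(2^n)` and `(n, 1^n)`, and these are incomparable unless `n ≤ 2`. When `N` is odd,
parts of size at most `2` already force more than `N / 2` parts, so only the hook remains.
-/

open Finset

theorem Dominates.refl (f : ℕ → ℕ) : Dominates f f := fun _ => le_rfl

theorem Dominates.trans {f g h : ℕ → ℕ} (hfg : Dominates f g) (hgh : Dominates g h) :
    Dominates f h :=
  fun m => (hfg m).trans (hgh m)

theorem Dominates.antisymm {f g : ℕ → ℕ} (hfg : Dominates f g) (hgf : Dominates g f) : f = g := by
  have hsum (m : ℕ) : ∑ i ∈ range m, f i = ∑ i ∈ range m, g i := (hfg m).antisymm (hgf m)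
  funext i
  have hsucc := hsum (i + 1)
  rwa [sum_range_succ, sum_range_succ, hsum i, add_right_inj] at hsucc

theorem maximalsIn_eq_of_isAntichain {P S : Set (ℕ → ℕ)} (hSP : S ⊆ P)
    (hcofinal : ∀ f ∈ P, ∃ s ∈ S, Dominates f s) (hS : IsAntichain Dominates S) :
    maximalsIn P = S := by
  ext f
  constructor
  · rintro ⟨hf, hmax⟩
    obtain ⟨s, hs, hfs⟩ := hcofinal f hf
    rwa [hmax s (hSP hs) hfs]
  · refine fun hf => ⟨hSP hf, fun g hg hfg => ?_⟩
    obtain ⟨s, hs, hgs⟩ := hcofinal g hg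
    obtain rfl : f = s := hS.eq hf hs (hfg.trans hgs)
    exact hfg.antisymm hgs

theorem maximalsIn_eq_singleton {P : Set (ℕ → ℕ)} {g : ℕ → ℕ} (hg : g ∈ P)
    (hgreatest : ∀ f ∈ P, Dominates f g) : maximalsIn P = {g} :=
  maximalsIn_eq_of_isAntichain (Set.singleton_subset_iff.2 hg)
    (fun f hf => ⟨g, rfl, hgreatest f hf⟩) (IsAntichain.singleton)

section Antitone

variable {M : Type*} [AddCommMonoid M] [PartialOrder M] {f : ℕ → M}

theorem sum_range_le_sum_range_of_apply_eq_zero [CanonicallyOrderedAdd M] (hf : Antitone f) {k : ℕ}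
    (hk : f k = 0) (m : ℕ) : ∑ i ∈ range m, f i ≤ ∑ i ∈ range k, f i :=
  sum_le_sum_of_ne_zero fun _ _ hi =>
    mem_range.2 <| not_le.1 fun hki => hi <| nonpos_iff_eq_zero.1 <| (hf hki).trans_eq hk

theorem sum_range_le_nsmul_apply_zero [IsOrderedAddMonoid M] (hf : Antitone f) (m : ℕ) :
    ∑ i ∈ range m, f i ≤ m • f 0 := by
  simpa only [card_range] using sum_le_card_nsmul (range m) f (f 0) fun i _ => hf i.zero_le

theorem sum_range_add_nsmul_le_sum_range_succ [IsOrderedAddMonoid M] (hf : Antitone f) {m k : ℕ}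
    (hmk : m ≤ k + 1) :
    ∑ i ∈ range m, f i + (k + 1 - m) • f k ≤ ∑ i ∈ range (k + 1), f i := by
  rw [← sum_range_add_sum_Ico f hmk, ← Nat.card_Ico]
  gcongr
  exact card_nsmul_le_sum _ _ _ fun i hi => hf (Nat.le_of_lt_succ (mem_Ico.1 hi).2)

end Antitone

namespace IsPartitionOf

variable {N : ℕ} {f : ℕ → ℕ}

theorem sum_range_le (hf : IsPartitionOf N f) (m : ℕ) : ∑ i ∈ range m, f i ≤ N :=
  (sum_range_le_sum_range_of_apply_eq_zero hf.1 hf.2.1 m).trans_eq hf.2.2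

theorem le_sum_range_of_apply_eq_zero (hf : IsPartitionOf N f) {k : ℕ} (hk : f k = 0) :
    N ≤ ∑ i ∈ range k, f i :=
  hf.2.2.symm.trans_le (sum_range_le_sum_range_of_apply_eq_zero hf.1 hk N)

theorem le_mul_apply_zero_of_apply_eq_zero (hf : IsPartitionOf N f) {k : ℕ} (hk : f k = 0) :
    N ≤ k * f 0 :=
  (hf.le_sum_range_of_apply_eq_zero hk).trans (sum_range_le_nsmul_apply_zero hf.1 k)

theorem lt_numParts_iff (hf : IsPartitionOf N f) (k : ℕ) : k < numParts N f ↔ f k ≠ 0 := by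
  constructor
  · refine fun h hk => h.not_ge ?_
    have hsub : (range N).filter (fun i => f i ≠ 0) ⊆ range k := fun i hi =>
      mem_range.2 <| not_le.1 fun hki =>
        (mem_filter.1 hi).2 <| Nat.eq_zero_of_le_zero <| (hf.1 hki).trans_eq hk
    exact (card_le_card hsub).trans_eq (card_range k)
  · intro hk
    have hkN : k < N := not_le.1 fun hNk =>
      hk <| Nat.eq_zero_of_le_zero <| (hf.1 hNk).trans_eq hf.2.1
    have hsub : range (k + 1) ⊆ (range N).filter (fun i => f i ≠ 0) := fun i hi => by
      have hik : i ≤ k := mem_range_succ_iff.1 hi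
      exact mem_filter.2 ⟨mem_range.2 (hik.trans_lt hkN),
        ((Nat.pos_of_ne_zero hk).trans_le (hf.1 hik)).ne'⟩
    exact (card_range (k + 1)).symm.trans_le (card_le_card hsub)

end IsPartitionOf

theorem sum_range_twoPow (r m : ℕ) : ∑ i ∈ range m, twoPow r i = 2 * min m r := by
  induction m with
  | zero => simp
  | succ m ih =>
    rw [sum_range_succ, ih]
    unfold twoPow
    split_ifs <;> omega

theorem sum_range_succ_hookPart (a b m : ℕ) :
    ∑ i ∈ range (m + 1), hookPart a b i = a + min m b := by
  induction m with
  | zero => simp [hookPart]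
  | succ m ih =>
    rw [sum_range_succ, ih]
    simp only [hookPart, m.succ_ne_zero, if_false]
    split_ifs <;> omega

theorem isPartitionOf_twoPow (r : ℕ) : IsPartitionOf (2 * r) (twoPow r) := by
  refine ⟨fun i j hij => ?_, ?_, ?_⟩
  · unfold twoPow
    split_ifs <;> omega
  · unfold twoPow
    split_ifs <;> omega
  · rw [sum_range_twoPow]
    omega

theorem isPartitionOf_hookPart {N a b : ℕ} (hN : N = a + b) (ha : a ≠ 0) :
    IsPartitionOf N (hookPart a b) := by
  subst hN
  refine ⟨fun i j hij => ?_, ?_, ?_⟩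
  · unfold hookPart
    split_ifs <;> omega
  · unfold hookPart
    split_ifs <;> omega
  · obtain ⟨c, rfl⟩ := Nat.exists_eq_succ_of_ne_zero ha
    rw [Nat.succ_add, sum_range_succ_hookPart]
    omega

theorem IsPartitionOf.dominates_twoPow_iff {r : ℕ} {f : ℕ → ℕ} (hf : IsPartitionOf (2 * r) f) :
    Dominates f (twoPow r) ↔ f 0 ≤ 2 := by
  constructor
  · intro h
    have h1 := h 1
    rw [sum_range_one, sum_range_twoPow] at h1
    omega
  · intro h0 m
    have htwo : ∑ i ∈ range m, f i ≤ m * 2 :=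
      (sum_range_le_nsmul_apply_zero hf.1 m).trans (Nat.mul_le_mul_left m h0)
    have htotal := hf.sum_range_le m
    rw [sum_range_twoPow]
    omega

theorem IsPartitionOf.dominates_hookPart_iff {N a b : ℕ} {f : ℕ → ℕ} (hf : IsPartitionOf N f)
    (hN : N = a + b) (ha : a ≠ 0) : Dominates f (hookPart a b) ↔ f b ≠ 0 := by
  subst hN
  constructor
  · intro h hb
    have hle : a + b ≤ ∑ i ∈ range b, hookPart a b i :=
      (hf.le_sum_range_of_apply_eq_zero hb).trans (h b)
    cases b with
    | zero => exact ha (by simpa using hle)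
    | succ c =>
      rw [sum_range_succ_hookPart] at hle
      omega
  · rintro hb (_ | m)
    · rfl
    rw [sum_range_succ_hookPart]
    have htotal := hf.sum_range_le
    rcases le_total b m with hbm | hmb
    · rw [min_eq_right hbm]
      exact htotal (m + 1)
    · have htail : ∑ i ∈ range (m + 1), f i + (b - m) * f b ≤ a + b := by
        simpa using (sum_range_add_nsmul_le_sum_range_succ hf.1 (Nat.succ_le_succ hmb)).trans
          (htotal (b + 1))
      have hparts : b - m ≤ (b - m) * f b := Nat.le_mul_of_pos_right _ (Nat.pos_of_ne_zero hb)
      omega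

theorem dominates_hookPart_twoPow_iff {n : ℕ} (hn : n ≠ 0) :
    Dominates (hookPart n n) (twoPow n) ↔ n ≤ 2 :=
  (isPartitionOf_hookPart (two_mul n) hn).dominates_twoPow_iff

theorem not_dominates_twoPow_hookPart {n : ℕ} (hn : n ≠ 0) :
    ¬ Dominates (twoPow n) (hookPart n n) := by
  rw [(isPartitionOf_twoPow n).dominates_hookPart_iff (two_mul n) hn]
  simp [twoPow]

theorem mem_defectiveSL_iff {N : ℕ} (hN : N ≠ 0) {f : ℕ → ℕ} :
    f ∈ defectiveSL N ↔ IsPartitionOf N f ∧ (f 0 ≤ 2 ∨ f (N / 2) ≠ 0) := by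
  refine and_congr_right fun hf => or_congr_right ?_
  rw [← hf.lt_numParts_iff]
  omega

theorem mem_defectiveSL_two_mul_iff {n : ℕ} (hn : n ≠ 0) {f : ℕ → ℕ} :
    f ∈ defectiveSL (2 * n) ↔
      IsPartitionOf (2 * n) f ∧ (Dominates f (twoPow n) ∨ Dominates f (hookPart n n)) := by
  rw [mem_defectiveSL_iff (by omega), Nat.mul_div_cancel_left n two_pos]
  refine and_congr_right fun hf => ?_
  rw [hf.dominates_twoPow_iff, hf.dominates_hookPart_iff (two_mul n) hn]

theorem mem_defectiveSL_two_mul_add_one_iff {n : ℕ} {f : ℕ → ℕ} :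
    f ∈ defectiveSL (2 * n + 1) ↔
      IsPartitionOf (2 * n + 1) f ∧ Dominates f (hookPart (n + 1) n) := by
  rw [mem_defectiveSL_iff (by omega), show (2 * n + 1) / 2 = n by omega]
  refine and_congr_right fun hf => ?_
  rw [hf.dominates_hookPart_iff (by omega) n.succ_ne_zero, or_iff_right_iff_imp]
  intro h0 hn
  have hle : 2 * n + 1 ≤ n * 2 :=
    (hf.le_mul_apply_zero_of_apply_eq_zero hn).trans (Nat.mul_le_mul_left n h0)
  omega

theorem twoPow_mem_defectiveSL {n : ℕ} (hn : n ≠ 0) : twoPow n ∈ defectiveSL (2 * n) :=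
  (mem_defectiveSL_two_mul_iff hn).2 ⟨isPartitionOf_twoPow n, .inl (.refl _)⟩

theorem hookPart_mem_defectiveSL {n : ℕ} (hn : n ≠ 0) : hookPart n n ∈ defectiveSL (2 * n) :=
  (mem_defectiveSL_two_mul_iff hn).2 ⟨isPartitionOf_hookPart (two_mul n) hn, .inr (.refl _)⟩

theorem maximalsIn_defectiveSL_two_mul_of_le_two {n : ℕ} (hn₀ : n ≠ 0) (hn : n ≤ 2) :
    maximalsIn (defectiveSL (2 * n)) = {twoPow n} :=
  maximalsIn_eq_singleton (twoPow_mem_defectiveSL hn₀) fun _ hf =>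
    ((mem_defectiveSL_two_mul_iff hn₀).1 hf).2.elim id fun hhook =>
      hhook.trans ((dominates_hookPart_twoPow_iff hn₀).2 hn)

theorem maximalsIn_defectiveSL_two_mul_of_two_lt {n : ℕ} (hn : 2 < n) :
    maximalsIn (defectiveSL (2 * n)) = {twoPow n, hookPart n n} := by
  have hn₀ : n ≠ 0 := by omega
  refine maximalsIn_eq_of_isAntichain ?_ (fun f hf => ?_) ?_
  · exact Set.pair_subset (twoPow_mem_defectiveSL hn₀) (hookPart_mem_defectiveSL hn₀)
  · simpa using ((mem_defectiveSL_two_mul_iff hn₀).1 hf).2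
  · exact Set.pairwise_pair.2 fun _ => ⟨not_dominates_twoPow_hookPart hn₀,
      mt (dominates_hookPart_twoPow_iff hn₀).1 hn.not_ge⟩

theorem maximalsIn_defectiveSL_two_mul_add_one (n : ℕ) :
    maximalsIn (defectiveSL (2 * n + 1)) = {hookPart (n + 1) n} := by
  have hpart : IsPartitionOf (2 * n + 1) (hookPart (n + 1) n) :=
    isPartitionOf_hookPart (by omega) n.succ_ne_zero
  exact maximalsIn_eq_singleton (mem_defectiveSL_two_mul_add_one_iff.2 ⟨hpart, .refl _⟩)
    fun _ hf => (mem_defectiveSL_two_mul_add_one_iff.1 hf).2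

/-- The maximal defective nilpotent `SL_N`-orbits: `(2,2)` for `N = 4`; `(2^n)` and
`(n, 1^n)` for `N = 2n ≥ 6`; `(n+1, 1^n)` for `N = 2n+1 ≥ 5`. -/
theorem stmt10 (N : ℕ) (hN : 4 ≤ N) :
    (N = 4 → maximalsIn (defectiveSL N) = {twoPow 2}) ∧
    (∀ n : ℕ, N = 2 * n → 6 ≤ N →
      maximalsIn (defectiveSL N) = {twoPow n, hookPart n n}) ∧
    (∀ n : ℕ, N = 2 * n + 1 → 5 ≤ N →
      maximalsIn (defectiveSL N) = {hookPart (n + 1) n}) := by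
  refine ⟨?_, ?_, ?_⟩
  · rintro rfl
    exact maximalsIn_defectiveSL_two_mul_of_le_two two_ne_zero le_rfl
  · rintro n rfl h6
    exact maximalsIn_defectiveSL_two_mul_of_two_lt (by omega)
  · rintro n rfl -
    exact maximalsIn_defectiveSL_two_mul_add_one n
end
end
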